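/- arXiv:2506.09618 — 2 statements merged into one kernel-verified Lean document; each statement's English description precedes it below -/
import Mathlib

section
/- Let C be an arbitrary set of corner minors of M, let 𝒲 denote the set of admissible sets W ⊆ V(C) for which P_W(C) is a minimal prime of I(C), and let h₁ and v₁ be the vertices of G(C) corresponding to the maximal horizontal and vertical intervals H₁ and V₁ of C containing x₁₁. Then ⋂_{W ∈ 𝒲} P_W(C) = I(C) + (x₁₁ f_σ : σ a cycle in G(C) passing through neither v₁ nor h₁). In particular, the radical of I(C) equals the right-hand side. -/
open MvPolynomial

/-- A 2-minor `[a₁,a₂|b₁,b₂]` (with `a₁ < a₂`, `b₁ < b₂`) of the `m × n` matrix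
of indeterminates `M = (x_{ij})`. -/
structure Minor2 (m n : ℕ) where
  a1 : Fin m
  a2 : Fin m
  b1 : Fin n
  b2 : Fin n
  ha : a1 < a2
  hb : b1 < b2

namespace Minor2

variable {m n : ℕ}

/-- The vertex set of a 2-minor. -/
def vertexSet (δ : Minor2 m n) : Set (Fin m × Fin n) :=
  {(δ.a1, δ.b1), (δ.a1, δ.b2), (δ.a2, δ.b1), (δ.a2, δ.b2)}

/-- `{p,q}` is one of the two vertical edges of the minor `δ`. -/
def VertEdge (δ : Minor2 m n) (p q : Fin m × Fin n) : Prop :=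
  ({p, q} : Set (Fin m × Fin n)) = {(δ.a1, δ.b1), (δ.a2, δ.b1)} ∨
  ({p, q} : Set (Fin m × Fin n)) = {(δ.a1, δ.b2), (δ.a2, δ.b2)}

/-- `{p,q}` is one of the two horizontal edges of the minor `δ`. -/
def HorizEdge (δ : Minor2 m n) (p q : Fin m × Fin n) : Prop :=
  ({p, q} : Set (Fin m × Fin n)) = {(δ.a1, δ.b1), (δ.a1, δ.b2)} ∨
  ({p, q} : Set (Fin m × Fin n)) = {(δ.a2, δ.b1), (δ.a2, δ.b2)}

/-- `{p,q}` is an edge (vertical or horizontal) of the minor `δ`. -/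
def IsEdge (δ : Minor2 m n) (p q : Fin m × Fin n) : Prop :=
  δ.VertEdge p q ∨ δ.HorizEdge p q

/-- The binomial `f_δ = x_{a₁b₁}x_{a₂b₂} − x_{a₁b₂}x_{a₂b₁}` of the 2-minor `δ`. -/
noncomputable def binom (K : Type*) [Field K] (δ : Minor2 m n) : MvPolynomial (Fin m × Fin n) K :=
  X (δ.a1, δ.b1) * X (δ.a2, δ.b2) - X (δ.a1, δ.b2) * X (δ.a2, δ.b1)

end Minor2

/-- The vertex set `V(C)` of a collection `C` of 2-minors. -/
def vertexSetOf {m n : ℕ} (C : Set (Minor2 m n)) : Set (Fin m × Fin n) :=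
  ⋃ δ ∈ C, δ.vertexSet

/-- The binomial ideal `I(C)` generated by the binomials of the minors in `C`. -/
noncomputable def minorIdeal (K : Type*) [Field K] {m n : ℕ} (C : Set (Minor2 m n)) :
    Ideal (MvPolynomial (Fin m × Fin n) K) :=
  Ideal.span {f | ∃ δ ∈ C, f = Minor2.binom K δ}

/-- Two positions are joined by a vertical edge of some minor of `C`. -/
def vertAdj {m n : ℕ} (C : Set (Minor2 m n)) (p q : Fin m × Fin n) : Prop :=
  ∃ δ ∈ C, δ.VertEdge p q

/-- Two positions are joined by a horizontal edge of some minor of `C`. -/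
def horizAdj {m n : ℕ} (C : Set (Minor2 m n)) (p q : Fin m × Fin n) : Prop :=
  ∃ δ ∈ C, δ.HorizEdge p q

/-- The maximal vertical interval of `C` containing a position, encoded as the class of the
position under connectivity by vertical edges of minors of `C`. -/
def vClass {m n : ℕ} (C : Set (Minor2 m n)) (p : Fin m × Fin n) : Quot (vertAdj C) :=
  Quot.mk _ p

/-- The maximal horizontal interval of `C` containing a position. -/
def hClass {m n : ℕ} (C : Set (Minor2 m n)) (p : Fin m × Fin n) : Quot (horizAdj C) :=
  Quot.mk _ p

/-- The monomial map `φ` with `φ(x_{ab}) = h_i v_j`, where `H_i` and `V_j` are the maximal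
horizontal and vertical intervals of `C` containing `x_{ab}` (variables not appearing in any
minor of `C` are sent to products of fresh variables, so that the kernel of `φ` is the
extension to `S` of the toric ideal `J_C ⊆ S_C`). -/
noncomputable def phiC (K : Type*) [Field K] {m n : ℕ} (C : Set (Minor2 m n)) :
    MvPolynomial (Fin m × Fin n) K →ₐ[K]
      MvPolynomial (Quot (horizAdj C) ⊕ Quot (vertAdj C)) K :=
  aeval fun p => X (Sum.inl (hClass C p)) * X (Sum.inr (vClass C p))

/-- The toric ideal `J_C = ker φ`. -/
noncomputable def toricIdeal (K : Type*) [Field K] {m n : ℕ} (C : Set (Minor2 m n)) :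
    Ideal (MvPolynomial (Fin m × Fin n) K) :=
  RingHom.ker (phiC K C)

/-- A subset `W ⊆ V(C)` is admissible if for every `δ ∈ C` either `W ∩ V(δ) = ∅`
or `W` contains an edge of `δ`. -/
def Admissible {m n : ℕ} (C : Set (Minor2 m n)) (W : Set (Fin m × Fin n)) : Prop :=
  W ⊆ vertexSetOf C ∧
    ∀ δ ∈ C, W ∩ δ.vertexSet = ∅ ∨ ∃ p q, p ∈ W ∧ q ∈ W ∧ δ.IsEdge p q

/-- `C' = {δ ∈ C : V(δ) ∩ W = ∅}`. -/
def minorsAvoiding {m n : ℕ} (C : Set (Minor2 m n)) (W : Set (Fin m × Fin n)) :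
    Set (Minor2 m n) :=
  {δ ∈ C | δ.vertexSet ∩ W = ∅}

/-- The ideal generated by the variables with index in `W`. -/
noncomputable def varIdeal (K : Type*) [Field K] {m n : ℕ} (W : Set (Fin m × Fin n)) :
    Ideal (MvPolynomial (Fin m × Fin n) K) :=
  Ideal.span ((fun p => (X p : MvPolynomial (Fin m × Fin n) K)) '' W)

/-- The prime ideal `P_W(C) = (x_{ij} : x_{ij} ∈ W) + J_{C'}`,
where `C' = {δ ∈ C : V(δ) ∩ W = ∅}`. -/
noncomputable def PW (K : Type*) [Field K] {m n : ℕ} (C : Set (Minor2 m n))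
    (W : Set (Fin m × Fin n)) : Ideal (MvPolynomial (Fin m × Fin n) K) :=
  varIdeal K W + toricIdeal K (minorsAvoiding C W)

/-- A cycle `σ : h_{i₁}, v_{j₁}, h_{i₂}, v_{j₂}, …, h_{i_r}, v_{j_r}` (`r ≥ 2`) of the
bipartite graph `G(C)`, recorded by the intersection vertices
`p k = H_{i_k} ∩ V_{j_k}` and `q k = H_{i_{k+1}} ∩ V_{j_k}` (indices cyclic, `r = len + 2`). -/
structure CycleIn {m n : ℕ} (C : Set (Minor2 m n)) where
  len : ℕ
  p : Fin (len + 2) → Fin m × Fin n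
  q : Fin (len + 2) → Fin m × Fin n
  p_mem : ∀ k, p k ∈ vertexSetOf C
  q_mem : ∀ k, q k ∈ vertexSetOf C
  shareV : ∀ k, vClass C (p k) = vClass C (q k)
  shareH : ∀ k, hClass C (q k) = hClass C (p (k + 1))
  injH : Function.Injective fun k => hClass C (p k)
  injV : Function.Injective fun k => vClass C (p k)

/-- The binomial `f_σ` associated to a cycle `σ` of `G(C)`. -/
noncomputable def cycleBinom (K : Type*) [Field K] {m n : ℕ} {C : Set (Minor2 m n)}
    (σ : CycleIn C) : MvPolynomial (Fin m × Fin n) K :=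
  (∏ k, X (σ.p k)) - (∏ k, X (σ.q k))

namespace CornerAux

section Comb

variable {m n : ℕ} {C : Set (Minor2 m n)}

theorem mem_V {p : Fin m × Fin n} : p ∈ vertexSetOf C ↔ ∃ δ ∈ C, p ∈ δ.vertexSet := by
  simp [vertexSetOf]

theorem horizAdj_fst {p q : Fin m × Fin n} (h : horizAdj C p q) : p.1 = q.1 := by
  obtain ⟨δ, _, h | h⟩ := h <;> rcases Set.pair_eq_pair_iff.1 h with ⟨rfl, rfl⟩ | ⟨rfl, rfl⟩ <;> rfl

theorem vertAdj_snd {p q : Fin m × Fin n} (h : vertAdj C p q) : p.2 = q.2 := by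
  obtain ⟨δ, _, h | h⟩ := h <;> rcases Set.pair_eq_pair_iff.1 h with ⟨rfl, rfl⟩ | ⟨rfl, rfl⟩ <;> rfl

theorem horizAdj_mem {p q : Fin m × Fin n} (h : horizAdj C p q) :
    p ∈ vertexSetOf C ∧ q ∈ vertexSetOf C := by
  obtain ⟨δ, hδ, h | h⟩ := h <;> rcases Set.pair_eq_pair_iff.1 h with ⟨rfl, rfl⟩ | ⟨rfl, rfl⟩ <;>
    exact ⟨mem_V.2 ⟨δ, hδ, by simp [Minor2.vertexSet]⟩, mem_V.2 ⟨δ, hδ, by simp [Minor2.vertexSet]⟩⟩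

theorem vertAdj_mem {p q : Fin m × Fin n} (h : vertAdj C p q) :
    p ∈ vertexSetOf C ∧ q ∈ vertexSetOf C := by
  obtain ⟨δ, hδ, h | h⟩ := h <;> rcases Set.pair_eq_pair_iff.1 h with ⟨rfl, rfl⟩ | ⟨rfl, rfl⟩ <;>
    exact ⟨mem_V.2 ⟨δ, hδ, by simp [Minor2.vertexSet]⟩, mem_V.2 ⟨δ, hδ, by simp [Minor2.vertexSet]⟩⟩

theorem hClass_fst {p q : Fin m × Fin n} (h : hClass C p = hClass C q) : p.1 = q.1 :=
  congrArg (Quot.lift (fun p : Fin m × Fin n => p.1) (fun _ _ h => horizAdj_fst h)) h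

theorem vClass_snd {p q : Fin m × Fin n} (h : vClass C p = vClass C q) : p.2 = q.2 :=
  congrArg (Quot.lift (fun p : Fin m × Fin n => p.2) (fun _ _ h => vertAdj_snd h)) h

open Classical in
theorem hClass_iso {p q : Fin m × Fin n} (h : hClass C p = hClass C q) (hp : p ∉ vertexSetOf C) :
    p = q := by
  have := congrArg (Quot.lift (fun p : Fin m × Fin n => if p ∈ vertexSetOf C then none else some p)
    (fun _ _ h => by
      have := horizAdj_mem h
      simp [this.1, this.2])) h
  simp only [hClass, if_neg hp] at this
  split_ifs at this
  simpa using this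

open Classical in
theorem vClass_iso {p q : Fin m × Fin n} (h : vClass C p = vClass C q) (hp : p ∉ vertexSetOf C) :
    p = q := by
  have := congrArg (Quot.lift (fun p : Fin m × Fin n => if p ∈ vertexSetOf C then none else some p)
    (fun _ _ h => by
      have := vertAdj_mem h
      simp [this.1, this.2])) h
  simp only [vClass, if_neg hp] at this
  split_ifs at this
  simpa using this

variable [NeZero m] [NeZero n]

theorem h_top (hC : ∀ δ ∈ C, δ.a1 = 0 ∧ δ.b1 = 0) {δ : Minor2 m n} (h : δ ∈ C) : hClass C (0, δ.b2) = hClass C (0, 0) :=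
  (Quot.sound ⟨δ, h, Or.inl (by simp [hC δ h])⟩ : hClass C (0, 0) = hClass C (0, δ.b2)).symm

theorem h_bot (hC : ∀ δ ∈ C, δ.a1 = 0 ∧ δ.b1 = 0) {δ : Minor2 m n} (h : δ ∈ C) : hClass C (δ.a2, δ.b2) = hClass C (δ.a2, 0) :=
  (Quot.sound ⟨δ, h, Or.inr (by simp [hC δ h])⟩ :
    hClass C (δ.a2, 0) = hClass C (δ.a2, δ.b2)).symm

theorem v_left (hC : ∀ δ ∈ C, δ.a1 = 0 ∧ δ.b1 = 0) {δ : Minor2 m n} (h : δ ∈ C) : vClass C (δ.a2, 0) = vClass C (0, 0) :=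
  (Quot.sound ⟨δ, h, Or.inl (by simp [hC δ h])⟩ : vClass C (0, 0) = vClass C (δ.a2, 0)).symm

theorem v_right (hC : ∀ δ ∈ C, δ.a1 = 0 ∧ δ.b1 = 0) {δ : Minor2 m n} (h : δ ∈ C) : vClass C (δ.a2, δ.b2) = vClass C (0, δ.b2) :=
  (Quot.sound ⟨δ, h, Or.inr (by simp [hC δ h])⟩ :
    vClass C (0, δ.b2) = vClass C (δ.a2, δ.b2)).symm

theorem mem_cases (hC : ∀ δ ∈ C, δ.a1 = 0 ∧ δ.b1 = 0) {p : Fin m × Fin n} (hp : p ∈ vertexSetOf C) :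
    ∃ δ ∈ C, p = (0, 0) ∨ p = (0, δ.b2) ∨ p = (δ.a2, 0) ∨ p = (δ.a2, δ.b2) := by
  obtain ⟨δ, hδ, h⟩ := mem_V.1 hp
  refine ⟨δ, hδ, ?_⟩
  simpa [Minor2.vertexSet, hC δ hδ] using h

theorem inner_minor (hC : ∀ δ ∈ C, δ.a1 = 0 ∧ δ.b1 = 0) {a : Fin m} {b : Fin n} (hp : (a, b) ∈ vertexSetOf C)
    (h1 : a ≠ 0) (h2 : b ≠ 0) : ∃ δ ∈ C, δ.a2 = a ∧ δ.b2 = b := by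
  obtain ⟨δ, hδ, h⟩ := mem_cases hC hp
  refine ⟨δ, hδ, ?_⟩
  simp only [Prod.mk.injEq] at h
  tauto

/-- The combinatorial heart: congruence of monomials with the same image, multiplied by `x₁₁`. -/
theorem main_comb (hC : ∀ δ ∈ C, δ.a1 = 0 ∧ δ.b1 = 0) {A : Type*} [CommRing A] (x : Fin m × Fin n → A)
    (H1 : ∀ δ ∈ C, x (0, 0) * x (δ.a2, δ.b2) = x (0, δ.b2) * x (δ.a2, 0))
    (H2 : ∀ σ : CycleIn C, (∀ k, vClass C (σ.p k) ≠ vClass C (0, 0)) →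
      (∀ k, hClass C (σ.p k) ≠ hClass C (0, 0)) →
      x (0, 0) * ∏ k, x (σ.p k) = x (0, 0) * ∏ k, x (σ.q k)) (N : ℕ) :
    ∀ s t : Multiset (Fin m × Fin n), s.card = N →
      s.map (hClass C) = t.map (hClass C) → s.map (vClass C) = t.map (vClass C) →
      x (0, 0) * (s.map x).prod = x (0, 0) * (t.map x).prod := by
  induction N with
  | zero =>
    intro s t hs hh hv
    obtain rfl := Multiset.card_eq_zero.1 hs
    have : t = 0 := by
      rw [Multiset.map_zero] at hh
      exact Multiset.map_eq_zero.1 hh.symm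
    rw [this]
  | succ N ih =>
    -- cancel a common element
    have common : ∀ s t : Multiset (Fin m × Fin n), s.card = N + 1 →
        s.map (hClass C) = t.map (hClass C) → s.map (vClass C) = t.map (vClass C) →
        ∀ c ∈ s, c ∈ t → x (0, 0) * (s.map x).prod = x (0, 0) * (t.map x).prod := by
      intro s t hs hh hv c hcs hct
      obtain ⟨s, rfl⟩ := Multiset.exists_cons_of_mem hcs
      obtain ⟨t, rfl⟩ := Multiset.exists_cons_of_mem hct
      simp only [Multiset.map_cons, Multiset.cons_inj_right, Multiset.card_cons,
        Multiset.prod_cons] at *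
      have := ih s t (by omega) hh hv
      linear_combination x c * this
    have hmem : ∀ s t : Multiset (Fin m × Fin n), s.map (hClass C) = t.map (hClass C) →
        ∀ p ∈ s, ∃ q ∈ t, hClass C q = hClass C p := by
      intro s t h p hp
      have := Multiset.mem_map_of_mem (hClass C) hp
      rw [h] at this
      exact Multiset.mem_map.1 this
    have vmem : ∀ s t : Multiset (Fin m × Fin n), s.map (vClass C) = t.map (vClass C) →
        ∀ p ∈ s, ∃ q ∈ t, vClass C q = vClass C p := by
      intro s t h p hp
      have := Multiset.mem_map_of_mem (vClass C) hp
      rw [h] at this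
      exact Multiset.mem_map.1 this
    -- an isolated element is common
    have isolated : ∀ s t : Multiset (Fin m × Fin n), s.card = N + 1 →
        s.map (hClass C) = t.map (hClass C) → s.map (vClass C) = t.map (vClass C) →
        (∃ c ∈ s, c ∉ vertexSetOf C) →
        x (0, 0) * (s.map x).prod = x (0, 0) * (t.map x).prod := by
      rintro s t hs hh hv ⟨c, hcs, hc⟩
      obtain ⟨q, hq, e⟩ := hmem s t hh c hcs
      obtain rfl := hClass_iso e.symm hc
      exact common s t hs hh hv c hcs hq
    have wcase : ∀ s t : Multiset (Fin m × Fin n), s.card = N + 1 →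
        s.map (hClass C) = t.map (hClass C) → s.map (vClass C) = t.map (vClass C) →
        (∃ b : Fin n, b ≠ 0 ∧ ((0 : Fin m), b) ∈ s) →
        x (0, 0) * (s.map x).prod = x (0, 0) * (t.map x).prod := by
      rintro s t hs hh hv ⟨b, hb, hbs⟩
      obtain ⟨⟨a, b'⟩, hq, e⟩ := vmem s t hv _ hbs
      obtain rfl : b' = b := vClass_snd e
      by_cases ha : a = 0
      · subst ha
        exact common s t hs hh hv _ hbs hq
      have hqV : (a, b') ∈ vertexSetOf C := by
        by_contra hq'
        have := vClass_iso e hq'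
        simp only [Prod.mk.injEq] at this
        exact ha this.1
      obtain ⟨δ, hδ, rfl, rfl⟩ := inner_minor hC hqV ha hb
      obtain ⟨⟨a, b⟩, hp, e2⟩ := hmem t s hh.symm _ hq
      obtain rfl : a = δ.a2 := hClass_fst e2
      by_cases hpq : (δ.a2, b) = (δ.a2, δ.b2)
      · rw [hpq] at hp
        exact common s t hs hh hv _ hp hq
      have hpV : (δ.a2, b) ∈ vertexSetOf C := by
        by_contra hp'
        exact hpq (hClass_iso e2 hp')
      obtain ⟨s1, rfl⟩ := Multiset.exists_cons_of_mem hbs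
      have hp1 : (δ.a2, b) ∈ s1 := by
        rcases Multiset.mem_cons.1 hp with h | h
        · simp only [Prod.mk.injEq] at h
          exact absurd h.1 ha
        · exact h
      obtain ⟨s2, rfl⟩ := Multiset.exists_cons_of_mem hp1
      by_cases hb0 : b = 0
      · subst hb0
        rw [← common ((0, 0) ::ₘ (δ.a2, δ.b2) ::ₘ s2) t (by simpa using hs) ?_ ?_ _ (by simp) hq]
        · simp only [Multiset.map_cons, Multiset.prod_cons]
          linear_combination - x (0, 0) * (s2.map x).prod * H1 δ hδ
        · rw [← hh]
          simp only [Multiset.map_cons, h_top hC hδ, h_bot hC hδ]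
        · rw [← hv]
          simp only [Multiset.map_cons, v_left hC hδ, v_right hC hδ]
          rw [Multiset.cons_swap]
      · obtain ⟨ε, hε, h1, rfl⟩ := inner_minor hC hpV ha hb0
        have e1 := h_top hC hε
        have e2 := h_bot hC hε
        have e3 := v_right hC hε
        have e4 := H1 ε hε
        rw [h1] at e2 e3 e4
        rw [← common ((0, ε.b2) ::ₘ (δ.a2, δ.b2) ::ₘ s2) t (by simpa using hs) ?_ ?_ _ (by simp) hq]
        · simp only [Multiset.map_cons, Multiset.prod_cons]
          linear_combination - x (0, ε.b2) * (s2.map x).prod * H1 δ hδ +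
            x (0, δ.b2) * (s2.map x).prod * e4
        · rw [← hh]
          simp only [Multiset.map_cons, h_top hC hδ, h_bot hC hδ, e1, e2]
        · rw [← hv]
          simp only [Multiset.map_cons, v_right hC hδ, e3]
          rw [Multiset.cons_swap]
    have ucase : ∀ s t : Multiset (Fin m × Fin n), s.card = N + 1 →
        s.map (hClass C) = t.map (hClass C) → s.map (vClass C) = t.map (vClass C) →
        (∃ a : Fin m, a ≠ 0 ∧ (a, (0 : Fin n)) ∈ s) →
        x (0, 0) * (s.map x).prod = x (0, 0) * (t.map x).prod := by
      rintro s t hs hh hv ⟨a, ha, has⟩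
      obtain ⟨⟨a', b⟩, hq, e⟩ := hmem s t hh _ has
      obtain rfl : a' = a := hClass_fst e
      by_cases hb : b = 0
      · subst hb
        exact common s t hs hh hv _ has hq
      have hqV : (a', b) ∈ vertexSetOf C := by
        by_contra hq'
        have := hClass_iso e hq'
        simp only [Prod.mk.injEq] at this
        exact hb this.2
      obtain ⟨δ, hδ, rfl, rfl⟩ := inner_minor hC hqV ha hb
      obtain ⟨⟨a, b⟩, hp, e2⟩ := vmem t s hv.symm _ hq
      obtain rfl : b = δ.b2 := vClass_snd e2
      by_cases hpq : (a, δ.b2) = (δ.a2, δ.b2)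
      · rw [hpq] at hp
        exact common s t hs hh hv _ hp hq
      have hpV : (a, δ.b2) ∈ vertexSetOf C := by
        by_contra hp'
        exact hpq (vClass_iso e2 hp')
      obtain ⟨s1, rfl⟩ := Multiset.exists_cons_of_mem has
      have hp1 : (a, δ.b2) ∈ s1 := by
        rcases Multiset.mem_cons.1 hp with h | h
        · simp only [Prod.mk.injEq] at h
          exact absurd h.2 hb
        · exact h
      obtain ⟨s2, rfl⟩ := Multiset.exists_cons_of_mem hp1
      by_cases ha0 : a = 0
      · subst ha0
        rw [← common ((0, 0) ::ₘ (δ.a2, δ.b2) ::ₘ s2) t (by simpa using hs) ?_ ?_ _ (by simp) hq]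
        · simp only [Multiset.map_cons, Multiset.prod_cons]
          linear_combination - x (0, 0) * (s2.map x).prod * H1 δ hδ
        · rw [← hh]
          simp only [Multiset.map_cons, h_top hC hδ, h_bot hC hδ]
          rw [Multiset.cons_swap]
        · rw [← hv]
          simp only [Multiset.map_cons, v_left hC hδ, v_right hC hδ]
      · obtain ⟨ε, hε, rfl, h1⟩ := inner_minor hC hpV ha0 hb
        have e1 := v_left hC hε
        have e2 := h_bot hC hε
        have e3 := v_right hC hε
        have e4 := H1 ε hε
        rw [h1] at e2 e3 e4
        rw [← common ((ε.a2, 0) ::ₘ (δ.a2, δ.b2) ::ₘ s2) t (by simpa using hs) ?_ ?_ _ (by simp) hq]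
        · simp only [Multiset.map_cons, Multiset.prod_cons]
          linear_combination - x (ε.a2, 0) * (s2.map x).prod * H1 δ hδ +
            x (δ.a2, 0) * (s2.map x).prod * e4
        · rw [← hh]
          simp only [Multiset.map_cons, h_bot hC hδ, e2]
          rw [Multiset.cons_swap]
        · rw [← hv]
          simp only [Multiset.map_cons, v_left hC hδ, v_right hC hδ, e1, e3]
    intro s t hs hh hv
    have ht : t.card = N + 1 := by
      rw [← hs, ← Multiset.card_map (hClass C) s, hh, Multiset.card_map]
    by_cases i1 : ∃ c ∈ s, c ∉ vertexSetOf C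
    · exact isolated s t hs hh hv i1
    by_cases i2 : ∃ c ∈ t, c ∉ vertexSetOf C
    · exact (isolated t s ht hh.symm hv.symm i2).symm
    by_cases w1 : ∃ b : Fin n, b ≠ 0 ∧ ((0 : Fin m), b) ∈ s
    · exact wcase s t hs hh hv w1
    by_cases w2 : ∃ b : Fin n, b ≠ 0 ∧ ((0 : Fin m), b) ∈ t
    · exact (wcase t s ht hh.symm hv.symm w2).symm
    by_cases u1 : ∃ a : Fin m, a ≠ 0 ∧ (a, (0 : Fin n)) ∈ s
    · exact ucase s t hs hh hv u1
    by_cases u2 : ∃ a : Fin m, a ≠ 0 ∧ (a, (0 : Fin n)) ∈ t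
    · exact (ucase t s ht hh.symm hv.symm u2).symm
    by_cases cm : ∃ c ∈ s, c ∈ t
    · obtain ⟨c, h1, h2⟩ := cm
      exact common s t hs hh hv c h1 h2
    push Not at i1 i2 w1 w2 u1 u2 cm
    have good : ∀ s t : Multiset (Fin m × Fin n), s.map (hClass C) = t.map (hClass C) →
        (∀ b : Fin n, b ≠ 0 → ((0 : Fin m), b) ∉ s) →
        (∀ a : Fin m, a ≠ 0 → (a, (0 : Fin n)) ∉ s) →
        (∀ b : Fin n, b ≠ 0 → ((0 : Fin m), b) ∉ t) →
        (∀ c ∈ s, c ∉ t) → ∀ c ∈ s, c.1 ≠ 0 ∧ c.2 ≠ 0 := by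
      rintro s t hh w1 u1 w2 cm ⟨a, b⟩ hc
      have h0 : ¬ (a = 0 ∧ b = 0) := by
        rintro ⟨rfl, rfl⟩
        obtain ⟨⟨a, b⟩, hq, e⟩ := hmem s t hh _ hc
        obtain rfl : a = 0 := hClass_fst e
        by_cases hb : b = 0
        · subst hb
          exact cm _ hc hq
        · exact w2 b hb hq
      constructor
      · rintro rfl
        by_cases hb : b = 0
        · exact h0 ⟨rfl, hb⟩
        · exact w1 b hb hc
      · rintro rfl
        by_cases ha : a = 0
        · exact h0 ⟨ha, rfl⟩
        · exact u1 a ha hc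
    have gs := good s t hh w1 u1 w2 cm
    have gt := good t s hh.symm w2 u2 w1 (fun c h1 h2 => cm c h2 h1)
    have clsH : ∀ c ∈ vertexSetOf C, c.1 ≠ 0 → c.2 ≠ 0 → hClass C c = hClass C (c.1, 0) := by
      rintro ⟨a, b⟩ hc h1 h2
      obtain ⟨δ, hδ, rfl, rfl⟩ := inner_minor hC hc h1 h2
      exact h_bot hC hδ
    have clsV : ∀ c ∈ vertexSetOf C, c.1 ≠ 0 → c.2 ≠ 0 → vClass C c = vClass C (0, c.2) := by
      rintro ⟨a, b⟩ hc h1 h2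
      obtain ⟨δ, hδ, rfl, rfl⟩ := inner_minor hC hc h1 h2
      exact v_right hC hδ
    have hg : ∀ a : Fin m, (∃ p ∈ s, p.1 = a) → ∃ p : Fin m × Fin n, p ∈ s ∧ p.1 = a :=
      fun a ⟨p, h1, h2⟩ => ⟨p, h1, h2⟩
    have hf : ∀ b : Fin n, (∃ p ∈ s, p.2 = b) → ∃ q : Fin m × Fin n, q ∈ t ∧ q.2 = b := by
      rintro b ⟨p, h1, rfl⟩
      obtain ⟨q, hq, e⟩ := vmem s t hv p h1
      exact ⟨q, hq, vClass_snd e⟩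
    choose! g hg using hg
    choose! f hf using hf
    have hf' : ∀ a : Fin m, (∃ p ∈ s, p.1 = a) → f (g a).2 ∈ t ∧ (f (g a).2).2 = (g a).2 :=
      fun a ha => hf _ ⟨g a, (hg a ha).1, rfl⟩
    let T : Fin m → Fin m := fun a => (f (g a).2).1
    have hT : ∀ a : Fin m, (∃ p ∈ s, p.1 = a) → ∃ p ∈ s, p.1 = T a := by
      intro a ha
      obtain ⟨p, hp, e⟩ := hmem t s hh.symm _ (hf' a ha).1
      exact ⟨p, hp, hClass_fst e⟩
    have hTk : ∀ (a : Fin m), (∃ p ∈ s, p.1 = a) → ∀ k : ℕ, ∃ p ∈ s, p.1 = T^[k] a := by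
      intro a ha k
      induction k with
      | zero => exact ha
      | succ k ihk =>
        rw [Function.iterate_succ_apply']
        exact hT _ ihk
    obtain ⟨c0, hc0⟩ : ∃ c, c ∈ s := Multiset.card_pos_iff_exists_mem.1 (by omega)
    obtain ⟨a, ha, hper⟩ : ∃ a : Fin m, (∃ p ∈ s, p.1 = a) ∧ a ∈ Function.periodicPts T := by
      obtain ⟨i, j, hij, e⟩ :=
        Finite.exists_ne_map_eq_of_infinite (fun k : ℕ => T^[k] c0.1)
      wlog hlt : i < j generalizing i j
      · exact this j i hij.symm e.symm (by omega)
      refine ⟨T^[i] c0.1, hTk _ ⟨c0, hc0, rfl⟩ i, Function.mk_mem_periodicPts (n := j - i) (by omega) ?_⟩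
      unfold Function.IsPeriodicPt Function.IsFixedPt
      rw [← Function.iterate_add_apply, Nat.sub_add_cancel hlt.le]
      exact e.symm
    have hpos := Function.minimalPeriod_pos_of_mem_periodicPts hper
    have hne1 : Function.minimalPeriod T a ≠ 1 := by
      intro h1
      have h2 : T a = a := Function.minimalPeriod_eq_one_iff_isFixedPt.1 h1
      have h3 : f (g a).2 = g a := Prod.ext (h2.trans (hg a ha).2.symm) (hf' a ha).2
      have h4 := (hf' a ha).1
      rw [h3] at h4
      exact cm _ (hg a ha).1 h4
    obtain ⟨len, hlen⟩ : ∃ len, Function.minimalPeriod T a = len + 2 :=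
      ⟨Function.minimalPeriod T a - 2, by omega⟩
    have hps : ∀ k : ℕ, g (T^[k] a) ∈ s ∧ (g (T^[k] a)).1 = T^[k] a := fun k => hg _ (hTk a ha k)
    have hqt : ∀ k : ℕ, f (g (T^[k] a)).2 ∈ t ∧ (f (g (T^[k] a)).2).2 = (g (T^[k] a)).2 :=
      fun k => hf' _ (hTk a ha k)
    have hinj : Function.Injective fun k : Fin (len + 2) => T^[(k : ℕ)] a := by
      intro k l h
      exact Fin.ext (Function.iterate_injOn_Iio_minimalPeriod (by simp [hlen])
        (by simp [hlen]) h)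
    have hnext : ∀ k : Fin (len + 2), T^[((k + 1 : Fin (len + 2)) : ℕ)] a = T (T^[(k : ℕ)] a) := by
      intro k
      rw [← Function.iterate_succ_apply' T, ← Function.iterate_mod_minimalPeriod_eq (n := (k : ℕ).succ),
        hlen, Fin.val_add]
      simp
    have hclsV : ∀ p q : Fin m × Fin n, (p ∈ s ∨ p ∈ t) → (q ∈ s ∨ q ∈ t) → p.2 = q.2 →
        vClass C p = vClass C q := by
      intro p q hp hq e
      rw [clsV p (hp.elim (i1 p) (i2 p)) (hp.elim (fun h => (gs p h).1) (fun h => (gt p h).1))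
          (hp.elim (fun h => (gs p h).2) (fun h => (gt p h).2)),
        clsV q (hq.elim (i1 q) (i2 q)) (hq.elim (fun h => (gs q h).1) (fun h => (gt q h).1))
          (hq.elim (fun h => (gs q h).2) (fun h => (gt q h).2)), e]
    have hclsH : ∀ p q : Fin m × Fin n, (p ∈ s ∨ p ∈ t) → (q ∈ s ∨ q ∈ t) → p.1 = q.1 →
        hClass C p = hClass C q := by
      intro p q hp hq e
      rw [clsH p (hp.elim (i1 p) (i2 p)) (hp.elim (fun h => (gs p h).1) (fun h => (gt p h).1))
          (hp.elim (fun h => (gs p h).2) (fun h => (gt p h).2)),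
        clsH q (hq.elim (i1 q) (i2 q)) (hq.elim (fun h => (gs q h).1) (fun h => (gt q h).1))
          (hq.elim (fun h => (gs q h).2) (fun h => (gt q h).2)), e]
    let σ : CycleIn C :=
      { len := len
        p := fun k => g (T^[(k : ℕ)] a)
        q := fun k => f (g (T^[(k : ℕ)] a)).2
        p_mem := fun k => i1 _ (hps k).1
        q_mem := fun k => i2 _ (hqt k).1
        shareV := fun k => hclsV _ _ (Or.inl (hps k).1) (Or.inr (hqt k).1) (hqt k).2.symm
        shareH := fun k => hclsH _ _ (Or.inr (hqt k).1) (Or.inl (hps _).1) (by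
          rw [(hps _).2, hnext])
        injH := fun k l h => hinj (by
          have := hClass_fst h
          rwa [(hps _).2, (hps _).2] at this)
        injV := fun k l h => add_right_cancel (b := (1 : Fin (len + 2))) (hinj (by
          have := vClass_snd h
          simp only [hnext]
          simp only [T]
          rw [this])) }
    have key := H2 σ
      (fun k h => (gs _ (hps k).1).2 (vClass_snd h))
      (fun k h => (gs _ (hps k).1).1 (hClass_fst h))
    let ps : Multiset (Fin m × Fin n) := (Finset.univ : Finset (Fin (len + 2))).val.map σ.p
    let qs : Multiset (Fin m × Fin n) := (Finset.univ : Finset (Fin (len + 2))).val.map σ.q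
    have hpinj : Function.Injective σ.p := fun k l h => σ.injH (congrArg (hClass C) h)
    have hle : ps ≤ s := by
      refine (Multiset.le_iff_subset ((Multiset.nodup_map_iff_of_injective hpinj).2
        Finset.univ.nodup)).2 ?_
      intro c hc
      obtain ⟨k, -, rfl⟩ := Multiset.mem_map.1 hc
      exact (hps k).1
    obtain ⟨s1, hs1⟩ := Multiset.le_iff_exists_add.1 hle
    have hmv : ps.map (vClass C) = qs.map (vClass C) := by
      simp only [ps, qs, Multiset.map_map]
      exact Multiset.map_congr rfl (fun k _ => σ.shareV k)
    have hmh : ps.map (hClass C) = qs.map (hClass C) := by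
      simp only [ps, qs, Multiset.map_map]
      have e : (Finset.univ : Finset (Fin (len + 2))).val.map (fun k => k + 1)
          = (Finset.univ : Finset (Fin (len + 2))).val := by
        exact congrArg Finset.val (Finset.map_univ_equiv (Equiv.addRight (1 : Fin (len + 2))))
      conv_lhs => rw [← e]
      rw [Multiset.map_map]
      exact Multiset.map_congr rfl (fun k _ => (σ.shareH k).symm)
    have hq0 : σ.q (0 : Fin (len + 2)) ∈ qs + s1 :=
      Multiset.mem_add.2 (Or.inl (Multiset.mem_map_of_mem _ (Finset.mem_univ_val _)))
    rw [← common (qs + s1) t ?_ ?_ ?_ _ hq0 (hqt _).1]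
    · have e1 : (ps.map x).prod = ∏ k, x (σ.p k) := by
        simp only [ps, Multiset.map_map]; rfl
      have e2 : (qs.map x).prod = ∏ k, x (σ.q k) := by
        simp only [qs, Multiset.map_map]; rfl
      rw [hs1, Multiset.map_add, Multiset.map_add, Multiset.prod_add, Multiset.prod_add, e1, e2]
      linear_combination (s1.map x).prod * key
    · rw [← hs, hs1]; simp [ps, qs]
    · rw [← hh, hs1, Multiset.map_add, Multiset.map_add, hmh]
    · rw [← hv, hs1, Multiset.map_add, Multiset.map_add, hmv]

end Comb

section Alg

variable {K : Type*} [Field K] {m n : ℕ} {C : Set (Minor2 m n)}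

theorem prod_X {σ : Type*} (s : Multiset σ) [DecidableEq σ] :
    (s.map (fun p => (X p : MvPolynomial σ K))).prod = monomial (Multiset.toFinsupp s) 1 := by
  induction s using Multiset.induction_on with
  | empty => simp
  | cons a s ih =>
    rw [Multiset.map_cons, Multiset.prod_cons, ih, ← Multiset.singleton_add, map_add,
      Multiset.toFinsupp_singleton, X, monomial_mul, one_mul]

/-- the multiset of variables of the image of a monomial -/
def img (C : Set (Minor2 m n)) (s : Multiset (Fin m × Fin n)) :
    Multiset (Quot (horizAdj C) ⊕ Quot (vertAdj C)) :=
  (s.map (hClass C)).map Sum.inl + (s.map (vClass C)).map Sum.inr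

theorem filterMap_left {α β : Type*} (a : Multiset α) (b : Multiset β) :
    (a.map Sum.inl + b.map Sum.inr).filterMap Sum.getLeft? = a := by
  induction a using Multiset.induction_on with
  | empty =>
    induction b using Multiset.induction_on with
    | empty => simp
    | cons x b ih =>
      simp only [Multiset.map_zero, zero_add, Multiset.map_cons] at *
      rw [Multiset.filterMap_cons_none _ _ rfl, ih]
  | cons x a ih =>
    rw [Multiset.map_cons, Multiset.cons_add, Multiset.filterMap_cons_some Sum.getLeft? _ _ rfl, ih]

theorem filterMap_right {α β : Type*} (a : Multiset α) (b : Multiset β) :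
    (a.map Sum.inl + b.map Sum.inr).filterMap Sum.getRight? = b := by
  induction a using Multiset.induction_on with
  | empty =>
    induction b using Multiset.induction_on with
    | empty => simp
    | cons x b ih =>
      simp only [Multiset.map_zero, zero_add, Multiset.map_cons] at *
      rw [Multiset.filterMap_cons_some Sum.getRight? _ _ rfl, ih]
  | cons x a ih =>
    rw [Multiset.map_cons, Multiset.cons_add, Multiset.filterMap_cons_none _ _ rfl, ih]

theorem img_h {s t : Multiset (Fin m × Fin n)} (h : img C s = img C t) :
    s.map (hClass C) = t.map (hClass C) := by
  have := congrArg (Multiset.filterMap Sum.getLeft?) h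
  rwa [img, img, filterMap_left, filterMap_left] at this

theorem img_v {s t : Multiset (Fin m × Fin n)} (h : img C s = img C t) :
    s.map (vClass C) = t.map (vClass C) := by
  have := congrArg (Multiset.filterMap Sum.getRight?) h
  rwa [img, img, filterMap_right, filterMap_right] at this

open Classical in
theorem phi_prod (s : Multiset (Fin m × Fin n)) :
    phiC K C (s.map (fun p => (X p : MvPolynomial (Fin m × Fin n) K))).prod =
      monomial (Multiset.toFinsupp (img C s)) 1 := by
  rw [← prod_X, map_multiset_prod, img, Multiset.map_add, Multiset.prod_add]
  simp [Multiset.map_map, phiC, Multiset.prod_map_mul]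

open Classical in
/-- If monomials with equal image are congruent after multiplication by `z`, then `z J ⊆ R`. -/
theorem mul_toric_mem (R : Ideal (MvPolynomial (Fin m × Fin n) K))
    (z : MvPolynomial (Fin m × Fin n) K)
    (H : ∀ s t : Multiset (Fin m × Fin n), img C s = img C t →
      Ideal.Quotient.mk R (z * (s.map (fun p => (X p : MvPolynomial (Fin m × Fin n) K))).prod) =
      Ideal.Quotient.mk R (z * (t.map (fun p => (X p : MvPolynomial (Fin m × Fin n) K))).prod))
    {f : MvPolynomial (Fin m × Fin n) K} (hf : f ∈ toricIdeal K C) : z * f ∈ R := by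
  let rep : (Quot (horizAdj C) ⊕ Quot (vertAdj C) →₀ ℕ) → Multiset (Fin m × Fin n) :=
    fun d => if h : ∃ s, Multiset.toFinsupp (img C s) = d then h.choose else 0
  have hrep : ∀ s, img C (rep (Multiset.toFinsupp (img C s))) = img C s := by
    intro s
    have h : ∃ s', Multiset.toFinsupp (img C s') = Multiset.toFinsupp (img C s) := ⟨s, rfl⟩
    simp only [rep, dif_pos h]
    exact Multiset.toFinsupp.injective h.choose_spec
  let L : MvPolynomial (Quot (horizAdj C) ⊕ Quot (vertAdj C)) K →ₗ[K]
      (MvPolynomial (Fin m × Fin n) K ⧸ R) :=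
    (basisMonomials _ K).constr K fun d => Ideal.Quotient.mk R
      (z * ((rep d).map (fun p => (X p : MvPolynomial (Fin m × Fin n) K))).prod)
  have hL : ∀ d, L (monomial d 1) = Ideal.Quotient.mk R
      (z * ((rep d).map (fun p => (X p : MvPolynomial (Fin m × Fin n) K))).prod) := by
    intro d
    have := (basisMonomials (Quot (horizAdj C) ⊕ Quot (vertAdj C)) K).constr_basis K
      (fun d => Ideal.Quotient.mk R
        (z * ((rep d).map (fun p => (X p : MvPolynomial (Fin m × Fin n) K))).prod)) d
    rwa [coe_basisMonomials] at this
  have key : L ∘ₗ (phiC K C).toLinearMap =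
      (Ideal.Quotient.mkₐ K R).toLinearMap ∘ₗ LinearMap.mulLeft K z := by
    refine (basisMonomials (Fin m × Fin n) K).ext fun d => ?_
    rw [coe_basisMonomials]
    have e : (monomial d (1 : K)) =
        ((Finsupp.toMultiset d).map (fun p => (X p : MvPolynomial (Fin m × Fin n) K))).prod := by
      rw [prod_X]; simp
    simp only [LinearMap.comp_apply, AlgHom.toLinearMap_apply, LinearMap.mulLeft_apply, e]
    rw [phi_prod, hL]
    exact H _ _ (hrep _)
  have := congrArg (fun F => F f) key
  simp only [LinearMap.comp_apply, AlgHom.toLinearMap_apply, LinearMap.mulLeft_apply] at this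
  rw [show phiC K C f = 0 from hf, map_zero] at this
  exact Ideal.Quotient.eq_zero_iff_mem.1 this.symm

theorem sub_mem_varIdeal (W : Set (Fin m × Fin n)) [DecidablePred (· ∈ W)] (f : MvPolynomial (Fin m × Fin n) K) :
    f - aeval (fun p => if p ∈ W then (0 : MvPolynomial (Fin m × Fin n) K) else X p) f ∈
      varIdeal K W := by
  have key : (Ideal.Quotient.mkₐ K (varIdeal K W)) =
      (Ideal.Quotient.mkₐ K (varIdeal K W)).comp
        (aeval (fun p => if p ∈ W then (0 : MvPolynomial (Fin m × Fin n) K) else X p)) := by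
    refine algHom_ext fun p => ?_
    simp only [AlgHom.comp_apply, aeval_X]
    split_ifs with h
    · rw [map_zero]
      exact Ideal.Quotient.eq_zero_iff_mem.2 (Ideal.subset_span ⟨p, h, rfl⟩)
    · rfl
  rw [← Ideal.Quotient.eq]
  exact congrArg (fun F => F f) key

theorem toric_prime : (toricIdeal K C).IsPrime := RingHom.ker_isPrime _

theorem PW_prime (W : Set (Fin m × Fin n)) : (PW K C W).IsPrime := by
  classical
  set D := minorsAvoiding C W with hD
  have hW : ∀ p ∈ W, p ∉ vertexSetOf D := by
    intro p hp h
    obtain ⟨δ, hδ, h⟩ := mem_V.1 h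
    have : p ∈ δ.vertexSet ∩ W := ⟨h, hp⟩
    rw [hδ.2] at this
    exact this
  let τ : MvPolynomial (Quot (horizAdj D) ⊕ Quot (vertAdj D)) K →ₐ[K]
      MvPolynomial (Quot (horizAdj D) ⊕ Quot (vertAdj D)) K :=
    aeval (Sum.elim (fun c => if ∃ p ∈ W, hClass D p = c then 0 else X (Sum.inl c))
      (fun c => X (Sum.inr c)))
  let e : MvPolynomial (Fin m × Fin n) K →ₐ[K] MvPolynomial (Fin m × Fin n) K :=
    aeval (fun p => if p ∈ W then (0 : MvPolynomial (Fin m × Fin n) K) else X p)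
  have key : τ.comp (phiC K D) = (phiC K D).comp e := by
    refine algHom_ext fun p => ?_
    simp only [AlgHom.comp_apply, phiC, e, aeval_X, map_mul, τ, Sum.elim_inl, Sum.elim_inr]
    by_cases hp : p ∈ W
    · rw [if_pos ⟨p, hp, rfl⟩, if_pos hp]; simp
    · rw [if_neg, if_neg hp]
      · simp
      · rintro ⟨q, hq, h⟩
        exact hp (hClass_iso h (hW q hq) ▸ hq)
  have hker : PW K C W = RingHom.ker (τ.comp (phiC K D)) := by
    apply le_antisymm
    · refine sup_le ?_ ?_
      · refine Ideal.span_le.2 ?_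
        rintro _ ⟨p, hp, rfl⟩
        change τ.comp (phiC K D) (X p) = 0
        rw [key]
        simp [e, hp]
      · intro f hf
        change τ (phiC K D f) = 0
        rw [show phiC K D f = 0 from hf, map_zero]
    · intro f hf
      have hf' : phiC K D (e f) = 0 := by
        have : (τ.comp (phiC K D)) f = 0 := hf
        rwa [key] at this
      have : f = (f - e f) + e f := by ring
      rw [this]
      exact Ideal.add_mem _ (Ideal.mem_sup_left (sub_mem_varIdeal W f)) (Ideal.mem_sup_right hf')
  rw [hker]
  exact RingHom.ker_isPrime _

variable [NeZero m] [NeZero n]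

theorem minor_le_iff (hC : ∀ δ ∈ C, δ.a1 = 0 ∧ δ.b1 = 0) (P : Ideal (MvPolynomial (Fin m × Fin n) K)) :
    minorIdeal K C ≤ P ↔ ∀ δ ∈ C, (X (0, 0) * X (δ.a2, δ.b2) - X (0, δ.b2) * X (δ.a2, 0) :
      MvPolynomial (Fin m × Fin n) K) ∈ P := by
  rw [minorIdeal, Ideal.span_le]
  constructor
  · intro h δ hδ
    have := h ⟨δ, hδ, rfl⟩
    simpa [Minor2.binom, hC δ hδ] using this
  · rintro h _ ⟨δ, hδ, rfl⟩
    simpa [Minor2.binom, hC δ hδ] using h δ hδ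

theorem minor_le_toric (hC : ∀ δ ∈ C, δ.a1 = 0 ∧ δ.b1 = 0) : minorIdeal K C ≤ toricIdeal K C := by
  rw [minor_le_iff hC]
  intro δ hδ
  change phiC K C _ = 0
  simp only [phiC, map_sub, map_mul, aeval_X, h_top hC hδ, h_bot hC hδ, v_left hC hδ,
    v_right hC hδ]
  ring

theorem minor_le_PW (hC : ∀ δ ∈ C, δ.a1 = 0 ∧ δ.b1 = 0) {W : Set (Fin m × Fin n)} (hW : Admissible C W) :
    minorIdeal K C ≤ PW K C W := by
  refine Ideal.span_le.2 ?_
  rintro _ ⟨δ, hδ, rfl⟩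
  rcases hW.2 δ hδ with h | ⟨p, q, hp, hq, h⟩
  · have hD : δ ∈ minorsAvoiding C W := ⟨hδ, by rwa [Set.inter_comm]⟩
    refine Ideal.mem_sup_right (minor_le_toric (fun ε hε => hC ε hε.1) ?_)
    exact Ideal.subset_span ⟨δ, hD, rfl⟩
  · refine Ideal.mem_sup_left ?_
    have hx : ∀ p ∈ W, (X p : MvPolynomial (Fin m × Fin n) K) ∈ varIdeal K W :=
      fun p hp => Ideal.subset_span ⟨p, hp, rfl⟩
    have h1 := hx p hp
    have h2 := hx q hq
    rw [Minor2.binom]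
    rcases h with (h | h) | (h | h) <;> rcases Set.pair_eq_pair_iff.1 h with ⟨rfl, rfl⟩ | ⟨rfl, rfl⟩ <;>
    · refine Ideal.sub_mem _ ?_ ?_ <;>
      first
        | exact Ideal.mul_mem_left _ _ h1
        | exact Ideal.mul_mem_left _ _ h2
        | exact Ideal.mul_mem_right _ _ h1
        | exact Ideal.mul_mem_right _ _ h2

/-- Every prime over `I(C)` contains some `P_W(C)` with `W` admissible. -/
theorem exists_PW_le (hC : ∀ δ ∈ C, δ.a1 = 0 ∧ δ.b1 = 0) (P : Ideal (MvPolynomial (Fin m × Fin n) K)) [hP : P.IsPrime]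
    (hI : minorIdeal K C ≤ P) : ∃ W, Admissible C W ∧ PW K C W ≤ P := by
  classical
  have hI' := (minor_le_iff hC P).1 hI
  let W : Set (Fin m × Fin n) := {p | p ∈ vertexSetOf C ∧ (X p : MvPolynomial (Fin m × Fin n) K) ∈ P}
  have hvs : ∀ δ ∈ C, ∀ p ∈ δ.vertexSet, p ∈ vertexSetOf C := fun δ hδ p hp => mem_V.2 ⟨δ, hδ, hp⟩
  refine ⟨W, ⟨fun p hp => hp.1, fun δ hδ => ?_⟩, ?_⟩
  · obtain ⟨ha, hb⟩ := hC δ hδ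
    have v1 := hvs δ hδ (0, 0) (by simp [Minor2.vertexSet, ha, hb])
    have v2 := hvs δ hδ (0, δ.b2) (by simp [Minor2.vertexSet, ha, hb])
    have v3 := hvs δ hδ (δ.a2, 0) (by simp [Minor2.vertexSet, ha, hb])
    have v4 := hvs δ hδ (δ.a2, δ.b2) (by simp [Minor2.vertexSet, ha, hb])
    have hδP := hI' δ hδ
    have hiff : (X (0, 0) * X (δ.a2, δ.b2) : MvPolynomial (Fin m × Fin n) K) ∈ P ↔
        (X (0, δ.b2) * X (δ.a2, 0) : MvPolynomial (Fin m × Fin n) K) ∈ P := by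
      constructor
      · intro h
        have := P.sub_mem h hδP
        rwa [sub_sub_cancel] at this
      · intro h
        have := P.add_mem h hδP
        rwa [add_sub_cancel] at this
    rw [hP.mul_mem_iff_mem_or_mem, hP.mul_mem_iff_mem_or_mem] at hiff
    have e1 : δ.IsEdge (0, 0) (δ.a2, 0) := Or.inl (Or.inl (by rw [ha, hb]))
    have e2 : δ.IsEdge (0, δ.b2) (δ.a2, δ.b2) := Or.inl (Or.inr (by rw [ha]))
    have e3 : δ.IsEdge (0, 0) (0, δ.b2) := Or.inr (Or.inl (by rw [ha, hb]))
    have e4 : δ.IsEdge (δ.a2, 0) (δ.a2, δ.b2) := Or.inr (Or.inr (by rw [hb]))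
    by_cases hany : ((X (0, 0) : MvPolynomial (Fin m × Fin n) K) ∈ P ∨
        (X (δ.a2, δ.b2) : MvPolynomial (Fin m × Fin n) K) ∈ P)
    · right
      rcases hany with h1 | h1 <;> rcases hiff.1 (by tauto) with h2 | h2
      · exact ⟨_, _, ⟨v1, h1⟩, ⟨v2, h2⟩, e3⟩
      · exact ⟨_, _, ⟨v1, h1⟩, ⟨v3, h2⟩, e1⟩
      · exact ⟨_, _, ⟨v2, h2⟩, ⟨v4, h1⟩, e2⟩
      · exact ⟨_, _, ⟨v3, h2⟩, ⟨v4, h1⟩, e4⟩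
    · left
      have h2 := fun h => hany (hiff.2 h)
      ext p
      simp only [Set.mem_inter_iff, Set.mem_empty_iff_false, iff_false, not_and]
      rintro ⟨-, hp⟩ hpδ
      simp only [Minor2.vertexSet, ha, hb, Set.mem_insert_iff, Set.mem_singleton_iff] at hpδ
      rcases hpδ with rfl | rfl | rfl | rfl <;> tauto
  · set D := minorsAvoiding C W with hD
    have hCD : ∀ δ ∈ D, δ.a1 = 0 ∧ δ.b1 = 0 := fun δ hδ => hC δ hδ.1
    refine sup_le (Ideal.span_le.2 ?_) ?_
    · rintro _ ⟨p, hp, rfl⟩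
      exact hp.2
    · let L := FractionRing (MvPolynomial (Fin m × Fin n) K ⧸ P)
      let ι : MvPolynomial (Fin m × Fin n) K →ₐ[K] L :=
        (IsScalarTower.toAlgHom K (MvPolynomial (Fin m × Fin n) K ⧸ P) L).comp
          (Ideal.Quotient.mkₐ K P)
      have hι : ∀ f, ι f = 0 ↔ f ∈ P := by
        intro f
        change algebraMap (MvPolynomial (Fin m × Fin n) K ⧸ P) L (Ideal.Quotient.mk P f) = 0 ↔ _
        rw [FaithfulSMul.algebraMap_eq_zero_iff, Ideal.Quotient.eq_zero_iff_mem]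
      let hval : Fin m × Fin n → L := fun p =>
        if p ∈ vertexSetOf D then ι (X (p.1, 0)) / ι (X (0, 0)) else ι (X p)
      let vval : Fin m × Fin n → L := fun p =>
        if p ∈ vertexSetOf D then ι (X (0, p.2)) else 1
      let θ : MvPolynomial (Quot (horizAdj D) ⊕ Quot (vertAdj D)) K →ₐ[K] L :=
        aeval (Sum.elim
          (Quot.lift hval (fun p q h => by
            simp only [hval, (horizAdj_mem h).1, (horizAdj_mem h).2, horizAdj_fst h, if_true]))
          (Quot.lift vval (fun p q h => by
            simp only [vval, (vertAdj_mem h).1, (vertAdj_mem h).2, vertAdj_snd h, if_true])))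
      have key : θ.comp (phiC K D) = ι := by
        refine algHom_ext fun p => ?_
        have : θ.comp (phiC K D) (X p) = hval p * vval p := by
          simp [θ, phiC, hClass, vClass]
        rw [this]
        by_cases hp : p ∈ vertexSetOf D
        · obtain ⟨δ, hδ, h⟩ := mem_cases hCD hp
          have hz : ι (X (0, 0)) ≠ 0 := by
            intro h0
            have : ((0, 0) : Fin m × Fin n) ∈ δ.vertexSet ∩ W := by
              have h1 : ((0, 0) : Fin m × Fin n) ∈ δ.vertexSet := by
                simp [Minor2.vertexSet, hCD δ hδ]
              exact ⟨h1, hvs δ hδ.1 _ h1, (hι _).1 h0⟩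
            rw [hδ.2] at this
            exact this
          have hrel : ι (X (0, 0)) * ι (X (δ.a2, δ.b2)) = ι (X (0, δ.b2)) * ι (X (δ.a2, 0)) := by
            rw [← map_mul, ← map_mul, ← sub_eq_zero, ← map_sub, hι]
            exact hI' δ hδ.1
          simp only [hval, vval, if_pos hp]
          rw [div_mul_eq_mul_div, div_eq_iff hz]
          rcases h with rfl | rfl | rfl | rfl
          · rfl
          · exact mul_comm _ _
          · rfl
          · linear_combination - hrel
        · simp [hval, vval, hp]
      intro f hf
      rw [← hι, ← key]
      change θ (phiC K D f) = 0
      rw [show phiC K D f = 0 from hf, map_zero]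

/-- `I(C) + (x₁₁)` contains the radical of `I(C)`. -/
theorem radical_le (hC : ∀ δ ∈ C, δ.a1 = 0 ∧ δ.b1 = 0) : (minorIdeal K C).radical ≤ minorIdeal K C ⊔ Ideal.span {X (0, 0)} := by
  classical
  intro f hf
  set Q := minorIdeal K C ⊔ Ideal.span {(X (0, 0) : MvPolynomial (Fin m × Fin n) K)} with hQ
  have hz : X (0, 0) ∈ Q := Ideal.mem_sup_right (Ideal.subset_span rfl)
  have huw : ∀ δ ∈ C, (X (0, δ.b2) * X (δ.a2, 0) : MvPolynomial (Fin m × Fin n) K) ∈ Q := by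
    intro δ hδ
    have h1 := (minor_le_iff hC Q).1 le_sup_left δ hδ
    have := Q.sub_mem (Q.mul_mem_right (X (δ.a2, δ.b2)) hz) h1
    rwa [sub_sub_cancel] at this
  rw [f.as_sum]
  refine Ideal.sum_mem _ fun α hα => ?_
  have hdvd : ∀ g : Fin m × Fin n →₀ ℕ, g ≤ α → monomial g (1 : K) ∈ Q →
      monomial α (coeff α f) ∈ Q := by
    intro g hg h
    refine Ideal.mem_of_dvd _ ?_ h
    exact monomial_dvd_monomial.2 ⟨Or.inr hg, one_dvd _⟩
  by_cases h0 : α (0, 0) ≠ 0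
  · refine hdvd (Finsupp.single (0, 0) 1) ?_ hz
    rwa [Finsupp.single_le_iff, Nat.one_le_iff_ne_zero]
  push Not at h0
  by_cases h1 : ∃ δ ∈ C, α (0, δ.b2) ≠ 0 ∧ α (δ.a2, 0) ≠ 0
  · obtain ⟨δ, hδ, h2, h3⟩ := h1
    refine hdvd (Finsupp.single (0, δ.b2) 1 + Finsupp.single (δ.a2, 0) 1) ?_ ?_
    · have hne : ((0, δ.b2) : Fin m × Fin n) ≠ (δ.a2, 0) := by
        intro h
        have h4 := δ.ha
        rw [(hC δ hδ).1] at h4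
        exact h4.ne (congrArg Prod.fst h)
      intro p
      simp only [Finsupp.add_apply, Finsupp.single_apply]
      split_ifs with e1 e2 e2
      · exact absurd (e1.trans e2.symm) hne
      · subst e1; omega
      · subst e2; omega
      · omega
    · have := huw δ hδ
      rwa [X, X, monomial_mul, one_mul] at this
  · exfalso
    push Not at h1
    let T : Set (Fin m × Fin n) := {p | α p = 0}
    let e : MvPolynomial (Fin m × Fin n) K →ₐ[K] MvPolynomial (Fin m × Fin n) K :=
      aeval (fun p => if p ∈ T then (0 : MvPolynomial (Fin m × Fin n) K) else X p)
    have hle : minorIdeal K C ≤ RingHom.ker e := by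
      rw [minor_le_iff hC]
      intro δ hδ
      change e _ = 0
      have e0 : ∀ p, α p = 0 → e (X p) = 0 := by
        intro p hp
        simp [e, T, hp]
      rw [map_sub, map_mul, map_mul, e0 _ h0]
      by_cases h2 : α (0, δ.b2) = 0
      · rw [e0 _ h2]; ring
      · rw [e0 _ (h1 δ hδ h2)]; ring
    have hfe : e f = 0 := (RingHom.ker_isPrime e).radical_le_iff.2 hle hf
    have hfT : f - e f ∈ varIdeal K T := sub_mem_varIdeal T f
    rw [hfe, sub_zero] at hfT
    obtain ⟨p, hp, hp'⟩ := mem_ideal_span_X_image.1 hfT α hα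
    exact hp' hp

theorem radical_eq (hC : ∀ δ ∈ C, δ.a1 = 0 ∧ δ.b1 = 0) : (minorIdeal K C).radical =
      minorIdeal K C + Ideal.span {g : MvPolynomial (Fin m × Fin n) K |
        ∃ σ : CycleIn C,
          (∀ k, vClass C (σ.p k) ≠ vClass C ((0 : Fin m), (0 : Fin n))) ∧
          (∀ k, hClass C (σ.p k) ≠ hClass C ((0 : Fin m), (0 : Fin n))) ∧
          g = X ((0 : Fin m), (0 : Fin n)) * cycleBinom K σ} := by
  apply le_antisymm
  · set R := minorIdeal K C + Ideal.span {g : MvPolynomial (Fin m × Fin n) K |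
        ∃ σ : CycleIn C,
          (∀ k, vClass C (σ.p k) ≠ vClass C ((0 : Fin m), (0 : Fin n))) ∧
          (∀ k, hClass C (σ.p k) ≠ hClass C ((0 : Fin m), (0 : Fin n))) ∧
          g = X ((0 : Fin m), (0 : Fin n)) * cycleBinom K σ} with hR
    have hIR : minorIdeal K C ≤ R := le_sup_left
    intro f hf
    have hfJ : f ∈ toricIdeal K C :=
      (toric_prime.radical_le_iff).2 (minor_le_toric hC) hf
    obtain ⟨i, hi, y, hy, rfl⟩ := Submodule.mem_sup.1 (radical_le hC hf)
    obtain ⟨g, rfl⟩ := Ideal.mem_span_singleton'.1 hy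
    refine R.add_mem (hIR hi) ?_
    have h1 : g * X (0, 0) ∈ toricIdeal K C := by
      have := Ideal.sub_mem _ hfJ (minor_le_toric hC hi)
      rwa [add_sub_cancel_left] at this
    have h2 : g ∈ toricIdeal K C := by
      refine (toric_prime.mem_or_mem h1).resolve_right ?_
      intro h
      have : phiC K C (X (0, 0)) = 0 := h
      rw [phiC, aeval_X] at this
      exact mul_ne_zero (X_ne_zero _) (X_ne_zero _) this
    rw [mul_comm]
    refine mul_toric_mem R _ ?_ h2
    intro s t hst
    have := main_comb hC (fun p => Ideal.Quotient.mk R (X p : MvPolynomial (Fin m × Fin n) K))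
      ?_ ?_ _ s t rfl (img_h hst) (img_v hst)
    · rw [map_mul, map_mul, map_multiset_prod, map_multiset_prod, Multiset.map_map,
        Multiset.map_map]
      exact this
    · intro δ hδ
      simp only [← map_mul]
      rw [Ideal.Quotient.eq]
      exact (minor_le_iff hC R).1 hIR δ hδ
    · intro σ h3 h4
      simp only [← map_mul, ← map_prod]
      rw [Ideal.Quotient.eq, ← mul_sub]
      exact Ideal.mem_sup_right (Ideal.subset_span ⟨σ, h3, h4, rfl⟩)
  · refine sup_le Ideal.le_radical (Ideal.span_le.2 ?_)
    rintro _ ⟨σ, h3, h4, rfl⟩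
    change _ ∈ (minorIdeal K C).radical
    rw [Ideal.radical_eq_sInf, Submodule.mem_sInf]
    rintro P ⟨hI, hP⟩
    by_cases hz : (X (0, 0) : MvPolynomial (Fin m × Fin n) K) ∈ P
    · exact Ideal.mul_mem_right _ P hz
    refine Ideal.mul_mem_left P _ ?_
    have hI' := (minor_le_iff hC P).1 hI
    have hrel : ∀ c ∈ vertexSetOf C, vClass C c ≠ vClass C (0, 0) → hClass C c ≠ hClass C (0, 0) →
        Ideal.Quotient.mk P (X (0, 0)) * Ideal.Quotient.mk P (X c) =
        Ideal.Quotient.mk P (X (0, c.2)) * Ideal.Quotient.mk P (X (c.1, 0)) := by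
      intro c hc hv hh
      obtain ⟨δ, hδ, h⟩ := mem_cases hC hc
      rcases h with rfl | rfl | rfl | rfl
      · exact absurd rfl hv
      · exact absurd (h_top hC hδ) hh
      · exact absurd (v_left hC hδ) hv
      · rw [← map_mul, ← map_mul, Ideal.Quotient.eq]
        exact hI' δ hδ
    have hp : ∀ k, _ := fun k => hrel (σ.p k) (σ.p_mem k) (h3 k) (h4 k)
    have hq : ∀ k, _ := fun k => hrel (σ.q k) (σ.q_mem k) (σ.shareV k ▸ h3 k)
      (σ.shareH k ▸ h4 (k + 1))
    have hzr : Ideal.Quotient.mk P (X (0, 0)) ≠ 0 := fun h => hz (Ideal.Quotient.eq_zero_iff_mem.1 h)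
    rw [cycleBinom, ← Ideal.Quotient.eq, map_prod, map_prod]
    have hz2 : (∏ _k : Fin (σ.len + 2), Ideal.Quotient.mk P
        (X (0, 0) : MvPolynomial (Fin m × Fin n) K)) ≠ 0 := Finset.prod_ne_zero_iff.2 fun _ _ => hzr
    refine mul_left_cancel₀ hz2 ?_
    rw [← Finset.prod_mul_distrib, ← Finset.prod_mul_distrib, Finset.prod_congr rfl fun k _ => hp k,
      Finset.prod_congr rfl fun k _ => hq k, Finset.prod_mul_distrib, Finset.prod_mul_distrib]
    congr 1
    · refine Finset.prod_congr rfl fun k _ => ?_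
      rw [vClass_snd (σ.shareV k)]
    · rw [← Equiv.prod_comp (Equiv.addRight (1 : Fin (σ.len + 2)))]
      refine Finset.prod_congr rfl fun k _ => ?_
      rw [hClass_fst (σ.shareH k)]
      rfl

theorem iInf_eq (hC : ∀ δ ∈ C, δ.a1 = 0 ∧ δ.b1 = 0) : (⨅ W ∈ {W : Set (Fin m × Fin n) |
        Admissible C W ∧ PW K C W ∈ (minorIdeal K C).minimalPrimes}, PW K C W) =
      (minorIdeal K C).radical := by
  rw [← Ideal.sInf_minimalPrimes]
  apply le_antisymm
  · refine le_sInf fun P hP => ?_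
    have := hP.1.1
    obtain ⟨W, hW, hle⟩ := exists_PW_le hC P hP.1.2
    have e : PW K C W = P :=
      le_antisymm hle (hP.2 ⟨PW_prime W, minor_le_PW hC hW⟩ hle)
    subst e
    exact iInf₂_le W ⟨hW, hP⟩
  · exact le_iInf₂ fun W hW => sInf_le hW.2

end Alg

end CornerAux

theorem statement11 (K : Type*) [Field K] (m n : ℕ) [NeZero m] [NeZero n]
    (C : Set (Minor2 m n)) (hC : ∀ δ ∈ C, δ.a1 = 0 ∧ δ.b1 = 0) :
    (⨅ W ∈ {W : Set (Fin m × Fin n) |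
        Admissible C W ∧ PW K C W ∈ (minorIdeal K C).minimalPrimes},
      PW K C W) =
      minorIdeal K C + Ideal.span {g : MvPolynomial (Fin m × Fin n) K |
        ∃ σ : CycleIn C,
          (∀ k, vClass C (σ.p k) ≠ vClass C ((0 : Fin m), (0 : Fin n))) ∧
          (∀ k, hClass C (σ.p k) ≠ hClass C ((0 : Fin m), (0 : Fin n))) ∧
          g = X ((0 : Fin m), (0 : Fin n)) * cycleBinom K σ} ∧
    (minorIdeal K C).radical =
      minorIdeal K C + Ideal.span {g : MvPolynomial (Fin m × Fin n) K |
        ∃ σ : CycleIn C,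
          (∀ k, vClass C (σ.p k) ≠ vClass C ((0 : Fin m), (0 : Fin n))) ∧
          (∀ k, hClass C (σ.p k) ≠ hClass C ((0 : Fin m), (0 : Fin n))) ∧
          g = X ((0 : Fin m), (0 : Fin n)) * cycleBinom K σ} := by
  exact ⟨(CornerAux.iInf_eq hC).trans (CornerAux.radical_eq hC), CornerAux.radical_eq hC⟩
end

section
/- Let C be an arbitrary set of corner minors of M, and let h₁ and v₁ be the vertices of G(C) corresponding to the maximal horizontal and vertical intervals of C containing x₁₁. Then I(C) is a radical ideal if and only if the induced subgraph of G(C) obtained by deleting the vertices v₁ and h₁ contains no cycle. Moreover, if this subgraph contains no cycle, then I(C) = ⋂_{W ∈ 𝒲} P_W(C), an intersection of prime ideals. -/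
open MvPolynomial

section Corner

set_option linter.unusedSectionVars false
set_option linter.unusedSimpArgs false

variable {m n : ℕ} [NeZero m] [NeZero n] {C : Set (Minor2 m n)}

/-- The edges of the bipartite graph of non-corner positions. -/
def GEdge (C : Set (Minor2 m n)) (a : Fin m) (b : Fin n) : Prop :=
  ∃ δ ∈ C, δ.a2 = a ∧ δ.b2 = b

/-- All minors of `C` are corner minors. -/
def Corner (C : Set (Minor2 m n)) : Prop := ∀ δ ∈ C, δ.a1 = 0 ∧ δ.b1 = 0

theorem GEdge.intro' {δ : Minor2 m n} (h : δ ∈ C) : GEdge C δ.a2 δ.b2 := ⟨δ, h, rfl, rfl⟩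

theorem GEdge.ne_left (hC : Corner C) {a : Fin m} {b : Fin n} (h : GEdge C a b) : a ≠ 0 := by
  obtain ⟨δ, hδ, rfl, rfl⟩ := h
  have h1 := (hC δ hδ).1 ▸ δ.ha
  exact ne_of_gt h1

theorem GEdge.ne_right (hC : Corner C) {a : Fin m} {b : Fin n} (h : GEdge C a b) : b ≠ 0 := by
  obtain ⟨δ, hδ, rfl, rfl⟩ := h
  have h1 := (hC δ hδ).2 ▸ δ.hb
  exact ne_of_gt h1

theorem mem_V (hC : Corner C) {p : Fin m × Fin n} :
    p ∈ vertexSetOf C ↔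
      ∃ a b, GEdge C a b ∧ (p = (0, 0) ∨ p = (0, b) ∨ p = (a, 0) ∨ p = (a, b)) := by
  simp only [vertexSetOf, Set.mem_iUnion, Minor2.vertexSet, Set.mem_insert_iff,
    Set.mem_singleton_iff]
  constructor
  · rintro ⟨δ, hδ, h⟩
    rw [(hC δ hδ).1, (hC δ hδ).2] at h
    exact ⟨_, _, GEdge.intro' hδ, h⟩
  · rintro ⟨a, b, ⟨δ, hδ, rfl, rfl⟩, h⟩
    refine ⟨δ, hδ, ?_⟩
    rw [(hC δ hδ).1, (hC δ hδ).2]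
    exact h

theorem GEdge.mem (hC : Corner C) {a : Fin m} {b : Fin n} (h : GEdge C a b) :
    (a, b) ∈ vertexSetOf C := (mem_V hC).2 ⟨a, b, h, by simp⟩

theorem GEdge.mem_row (hC : Corner C) {a : Fin m} {b : Fin n} (h : GEdge C a b) :
    (0, b) ∈ vertexSetOf C := (mem_V hC).2 ⟨a, b, h, by simp⟩

theorem GEdge.mem_col (hC : Corner C) {a : Fin m} {b : Fin n} (h : GEdge C a b) :
    (a, 0) ∈ vertexSetOf C := (mem_V hC).2 ⟨a, b, h, by simp⟩

theorem GEdge.mem_zero (hC : Corner C) {a : Fin m} {b : Fin n} (h : GEdge C a b) :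
    (0, 0) ∈ vertexSetOf C := (mem_V hC).2 ⟨a, b, h, by simp⟩

/-- A vertex off row zero and column zero is an edge. -/
theorem gEdge_of_mem (hC : Corner C) {p : Fin m × Fin n} (hp : p ∈ vertexSetOf C)
    (h1 : p.1 ≠ 0) (h2 : p.2 ≠ 0) : GEdge C p.1 p.2 := by
  obtain ⟨a, b, h, rfl | rfl | rfl | rfl⟩ := (mem_V hC).1 hp <;> simp_all

theorem vertAdj_mem (hC : Corner C) {p q : Fin m × Fin n} (h : vertAdj C p q) :
    p ∈ vertexSetOf C ∧ q ∈ vertexSetOf C ∧ p.2 = q.2 := by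
  obtain ⟨δ, hδ, h⟩ := h
  have g := GEdge.intro' hδ
  simp only [Minor2.VertEdge, Set.pair_eq_pair_iff] at h
  rw [(hC δ hδ).1, (hC δ hδ).2] at h
  rcases h with (⟨rfl, rfl⟩ | ⟨rfl, rfl⟩) | (⟨rfl, rfl⟩ | ⟨rfl, rfl⟩) <;>
    simp [g.mem hC, g.mem_row hC, g.mem_col hC, g.mem_zero hC]

theorem horizAdj_mem (hC : Corner C) {p q : Fin m × Fin n} (h : horizAdj C p q) :
    p ∈ vertexSetOf C ∧ q ∈ vertexSetOf C ∧ p.1 = q.1 := by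
  obtain ⟨δ, hδ, h⟩ := h
  have g := GEdge.intro' hδ
  simp only [Minor2.HorizEdge, Set.pair_eq_pair_iff] at h
  rw [(hC δ hδ).1, (hC δ hδ).2] at h
  rcases h with (⟨rfl, rfl⟩ | ⟨rfl, rfl⟩) | (⟨rfl, rfl⟩ | ⟨rfl, rfl⟩) <;>
    simp [g.mem hC, g.mem_row hC, g.mem_col hC, g.mem_zero hC]

theorem vClass_zero (hC : Corner C) {p : Fin m × Fin n} (hp : p ∈ vertexSetOf C) :
    vClass C p = vClass C (0, p.2) := by
  obtain ⟨a, b, ⟨δ, hδ, rfl, rfl⟩, rfl | rfl | rfl | rfl⟩ := (mem_V hC).1 hp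
  · rfl
  · rfl
  · refine Quot.sound ⟨δ, hδ, Or.inl ?_⟩
    rw [(hC δ hδ).1, (hC δ hδ).2]
    exact Set.pair_comm _ _
  · refine Quot.sound ⟨δ, hδ, Or.inr ?_⟩
    rw [(hC δ hδ).1]
    exact Set.pair_comm _ _

theorem hClass_zero (hC : Corner C) {p : Fin m × Fin n} (hp : p ∈ vertexSetOf C) :
    hClass C p = hClass C (p.1, 0) := by
  obtain ⟨a, b, ⟨δ, hδ, rfl, rfl⟩, rfl | rfl | rfl | rfl⟩ := (mem_V hC).1 hp
  · rfl
  · refine Quot.sound ⟨δ, hδ, Or.inl ?_⟩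
    rw [(hC δ hδ).1, (hC δ hδ).2]
    exact Set.pair_comm _ _
  · rfl
  · refine Quot.sound ⟨δ, hδ, Or.inr ?_⟩
    rw [(hC δ hδ).2]
    exact Set.pair_comm _ _

theorem vClass_eq (hC : Corner C) {p q : Fin m × Fin n} (hp : p ∈ vertexSetOf C)
    (hq : q ∈ vertexSetOf C) (h : p.2 = q.2) : vClass C p = vClass C q := by
  rw [vClass_zero hC hp, vClass_zero hC hq, h]

theorem hClass_eq (hC : Corner C) {p q : Fin m × Fin n} (hp : p ∈ vertexSetOf C)
    (hq : q ∈ vertexSetOf C) (h : p.1 = q.1) : hClass C p = hClass C q := by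
  rw [hClass_zero hC hp, hClass_zero hC hq, h]

theorem of_vClass_eq (hC : Corner C) {p q : Fin m × Fin n} (h : vClass C p = vClass C q) :
    p = q ∨ (p ∈ vertexSetOf C ∧ q ∈ vertexSetOf C ∧ p.2 = q.2) := by
  have h' := Quot.eqvGen_exact h
  induction h' with
  | rel x y hxy => exact Or.inr (vertAdj_mem hC hxy)
  | refl x => exact Or.inl rfl
  | symm x y _ ih =>
    rcases ih h.symm with rfl | ⟨h1, h2, h3⟩
    · exact Or.inl rfl
    · exact Or.inr ⟨h2, h1, h3.symm⟩
  | trans x y z h1 h2 ih1 ih2 =>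
    rcases ih1 (Quot.eqvGen_sound h1) with rfl | ⟨g1, g2, g3⟩
    · exact ih2 h
    · rcases ih2 (Quot.eqvGen_sound h2) with rfl | ⟨h1', h2', h3'⟩
      · exact Or.inr ⟨g1, g2, g3⟩
      · exact Or.inr ⟨g1, h2', g3.trans h3'⟩

theorem of_hClass_eq (hC : Corner C) {p q : Fin m × Fin n} (h : hClass C p = hClass C q) :
    p = q ∨ (p ∈ vertexSetOf C ∧ q ∈ vertexSetOf C ∧ p.1 = q.1) := by
  have h' := Quot.eqvGen_exact h
  induction h' with
  | rel x y hxy => exact Or.inr (horizAdj_mem hC hxy)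
  | refl x => exact Or.inl rfl
  | symm x y _ ih =>
    rcases ih h.symm with rfl | ⟨h1, h2, h3⟩
    · exact Or.inl rfl
    · exact Or.inr ⟨h2, h1, h3.symm⟩
  | trans x y z h1 h2 ih1 ih2 =>
    rcases ih1 (Quot.eqvGen_sound h1) with rfl | ⟨g1, g2, g3⟩
    · exact ih2 h
    · rcases ih2 (Quot.eqvGen_sound h2) with rfl | ⟨h1', h2', h3'⟩
      · exact Or.inr ⟨g1, g2, g3⟩
      · exact Or.inr ⟨g1, h2', g3.trans h3'⟩

theorem snd_eq_of_vClass (hC : Corner C) {p q : Fin m × Fin n} (h : vClass C p = vClass C q) :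
    p.2 = q.2 := by
  rcases of_vClass_eq hC h with rfl | h
  · rfl
  · exact h.2.2

theorem fst_eq_of_hClass (hC : Corner C) {p q : Fin m × Fin n} (h : hClass C p = hClass C q) :
    p.1 = q.1 := by
  rcases of_hClass_eq hC h with rfl | h
  · rfl
  · exact h.2.2

theorem mem_of_vClass (hC : Corner C) {p q : Fin m × Fin n} (h : vClass C p = vClass C q)
    (hp : p ∈ vertexSetOf C) : q ∈ vertexSetOf C := by
  rcases of_vClass_eq hC h with rfl | h
  · exact hp
  · exact h.2.1

theorem mem_of_hClass (hC : Corner C) {p q : Fin m × Fin n} (h : hClass C p = hClass C q)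
    (hp : p ∈ vertexSetOf C) : q ∈ vertexSetOf C := by
  rcases of_hClass_eq hC h with rfl | h
  · exact hp
  · exact h.2.1

/-! ### The ideals -/

variable (K : Type*) [Field K]

theorem f_mem (hC : Corner C) {a : Fin m} {b : Fin n} (h : GEdge C a b) :
    (X (0, 0) * X (a, b) - X (0, b) * X (a, 0) : MvPolynomial (Fin m × Fin n) K)
      ∈ minorIdeal K C := by
  obtain ⟨δ, hδ, rfl, rfl⟩ := h
  refine Ideal.subset_span ⟨δ, hδ, ?_⟩
  rw [Minor2.binom, (hC δ hδ).1, (hC δ hδ).2]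

theorem minorIdeal_le (hC : Corner C) {J : Ideal (MvPolynomial (Fin m × Fin n) K)}
    (h : ∀ a b, GEdge C a b → (X (0, 0) * X (a, b) - X (0, b) * X (a, 0)) ∈ J) :
    minorIdeal K C ≤ J := by
  refine Ideal.span_le.2 ?_
  rintro _ ⟨δ, hδ, rfl⟩
  have := h _ _ (GEdge.intro' hδ)
  rwa [Minor2.binom, (hC δ hδ).1, (hC δ hδ).2]

theorem phi_X (C : Set (Minor2 m n)) (p : Fin m × Fin n) : phiC K C (X p) =
    X (Sum.inl (hClass C p)) * X (Sum.inr (vClass C p)) := by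
  simp [phiC]

theorem f_mem_toric (hC : Corner C) {a : Fin m} {b : Fin n} (h : GEdge C a b) :
    (X (0, 0) * X (a, b) - X (0, b) * X (a, 0) : MvPolynomial (Fin m × Fin n) K)
      ∈ toricIdeal K C := by
  rw [toricIdeal, RingHom.mem_ker]
  simp only [map_sub, map_mul, phi_X]
  rw [hClass_zero hC (h.mem hC), hClass_zero hC (h.mem_row hC), vClass_zero hC (h.mem hC),
    vClass_zero hC (h.mem_col hC)]
  ring

theorem minorIdeal_le_toric (hC : Corner C) : minorIdeal K C ≤ toricIdeal K C :=
  minorIdeal_le K hC fun _ _ h => f_mem_toric K hC h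

theorem X_not_mem_toric (p : Fin m × Fin n) : X p ∉ toricIdeal K C := by
  rw [toricIdeal, RingHom.mem_ker, phi_X]
  exact mul_ne_zero (X_ne_zero _) (X_ne_zero _)

theorem toric_prime : (toricIdeal K C).IsPrime := RingHom.ker_isPrime _

theorem vertexSet_sub {δ : Minor2 m n} (h : δ ∈ C) : δ.vertexSet ⊆ vertexSetOf C :=
  fun _ hp => Set.mem_biUnion h hp

theorem corner_avoid (hC : Corner C) (W : Set (Fin m × Fin n)) : Corner (minorsAvoiding C W) :=
  fun δ hδ => hC δ hδ.1

theorem not_mem_avoid {W : Set (Fin m × Fin n)} {p : Fin m × Fin n} (hp : p ∈ W) :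
    p ∉ vertexSetOf (minorsAvoiding C W) := by
  intro h
  simp only [vertexSetOf, Set.mem_iUnion] at h
  obtain ⟨δ, hδ, h⟩ := h
  have : p ∈ δ.vertexSet ∩ W := ⟨h, hp⟩
  rw [hδ.2] at this
  exact this

/-- The toric ideal is contained in the kernel of a map to a field which kills `I(C)` and does not
kill the variables in `V(C)`. -/
theorem toric_le_ker (hC : Corner C) {F : Type*} [Field F] [Algebra K F]
    (ι : MvPolynomial (Fin m × Fin n) K →ₐ[K] F)
    (hI : minorIdeal K C ≤ RingHom.ker ι) (hv : ∀ p ∈ vertexSetOf C, ι (X p) ≠ 0) :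
    toricIdeal K C ≤ RingHom.ker ι := by
  classical
  let H : Fin m × Fin n → F := fun p => if p ∈ vertexSetOf C then ι (X (p.1, 0)) else ι (X p)
  let V : Fin m × Fin n → F := fun p =>
    if p ∈ vertexSetOf C then ι (X (0, p.2)) / ι (X (0, 0)) else 1
  have hH : ∀ p q, horizAdj C p q → H p = H q := by
    intro p q h
    obtain ⟨h1, h2, h3⟩ := horizAdj_mem hC h
    simp [H, h1, h2, h3]
  have hV : ∀ p q, vertAdj C p q → V p = V q := by
    intro p q h
    obtain ⟨h1, h2, h3⟩ := vertAdj_mem hC h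
    simp [V, h1, h2, h3]
  let ψ : MvPolynomial (Quot (horizAdj C) ⊕ Quot (vertAdj C)) K →ₐ[K] F :=
    aeval (Sum.elim (Quot.lift H hH) (Quot.lift V hV))
  have key : ψ.comp (phiC K C) = ι := by
    apply MvPolynomial.algHom_ext
    intro p
    have e : ψ.comp (phiC K C) (X p) = H p * V p := by
      simp [phi_X, ψ, hClass, vClass]
    rw [e]
    by_cases hp : p ∈ vertexSetOf C
    · simp only [H, V, if_pos hp]
      have hz : (0, 0) ∈ vertexSetOf C := by
        obtain ⟨a, b, h, -⟩ := (mem_V hC).1 hp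
        exact h.mem_zero hC
      have hz' : ι (X (0, 0)) ≠ 0 := hv _ hz
      obtain ⟨a, b, h, rfl | rfl | rfl | rfl⟩ := (mem_V hC).1 hp
      · simp [hz']
      · simp only; rw [mul_div_cancel₀ _ hz']
      · simp [hz']
      · have := RingHom.mem_ker.1 (hI (f_mem K hC h))
        rw [map_sub, map_mul, map_mul, sub_eq_zero] at this
        simp only
        rw [← mul_div_assoc, mul_comm, ← this, mul_div_cancel_left₀ _ hz']
    · simp [H, V, hp]
  intro f hf
  rw [RingHom.mem_ker, ← key, AlgHom.comp_apply]
  rw [toricIdeal, RingHom.mem_ker] at hf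
  rw [hf, map_zero]

/-- A prime containing `I(C)` and avoiding the variables in `V(C)` contains the toric ideal. -/
theorem toric_le_prime (hC : Corner C) {P : Ideal (MvPolynomial (Fin m × Fin n) K)}
    (hP : P.IsPrime) (hI : minorIdeal K C ≤ P) (hv : ∀ p ∈ vertexSetOf C, X p ∉ P) :
    toricIdeal K C ≤ P := by
  let ι : MvPolynomial (Fin m × Fin n) K →ₐ[K]
      FractionRing (MvPolynomial (Fin m × Fin n) K ⧸ P) :=
    (IsScalarTower.toAlgHom K (MvPolynomial (Fin m × Fin n) K ⧸ P) _).comp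
      (Ideal.Quotient.mkₐ K P)
  have hι : RingHom.ker ι = P := by
    ext f
    rw [RingHom.mem_ker]
    simp only [ι, AlgHom.comp_apply, IsScalarTower.coe_toAlgHom']
    rw [FaithfulSMul.algebraMap_eq_zero_iff, Ideal.Quotient.mkₐ_eq_mk,
      Ideal.Quotient.eq_zero_iff_mem]
  have := toric_le_ker K hC ι (hι.symm ▸ hI) (fun p hp h => hv p hp (hι ▸ (RingHom.mem_ker.2 h)))
  rwa [hι] at this

/-- `P_W` is the kernel of a map to a domain. -/
theorem PW_prime (hC : Corner C) (W : Set (Fin m × Fin n)) : (PW K C W).IsPrime := by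
  classical
  set C' := minorsAvoiding C W with hC'
  have hc := corner_avoid hC W
  let H : Fin m × Fin n → MvPolynomial (Quot (horizAdj C') ⊕ Quot (vertAdj C')) K :=
    fun p => if p ∈ W then 0 else X (Sum.inl (hClass C' p))
  have hH : ∀ p q, horizAdj C' p q → H p = H q := by
    intro p q h
    obtain ⟨h1, h2, h3⟩ := horizAdj_mem hc h
    have e1 : p ∉ W := fun h => not_mem_avoid h h1
    have e2 : q ∉ W := fun h => not_mem_avoid h h2
    simp only [H, if_neg e1, if_neg e2]
    rw [hClass_eq hc h1 h2 h3]
  let θ : MvPolynomial (Quot (horizAdj C') ⊕ Quot (vertAdj C')) K →ₐ[K]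
      MvPolynomial (Quot (horizAdj C') ⊕ Quot (vertAdj C')) K :=
    aeval (Sum.elim (Quot.lift H hH) (fun v => X (Sum.inr v)))
  let κ : MvPolynomial (Fin m × Fin n) K →ₐ[K] MvPolynomial (Fin m × Fin n) K :=
    aeval (fun p => if p ∈ W then 0 else X p)
  have hcomm : θ.comp (phiC K C') = (phiC K C').comp κ := by
    apply MvPolynomial.algHom_ext
    intro p
    have e : θ.comp (phiC K C') (X p) = H p * X (Sum.inr (vClass C' p)) := by
      simp [phi_X, θ, hClass, vClass]
    rw [e]
    by_cases hp : p ∈ W <;> simp [κ, H, hp, phi_X]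
  have hκ : ∀ f, f - κ f ∈ varIdeal K W := by
    intro f
    have : (Ideal.Quotient.mkₐ K (varIdeal K W)).comp κ = Ideal.Quotient.mkₐ K (varIdeal K W) := by
      apply MvPolynomial.algHom_ext
      intro p
      by_cases hp : p ∈ W
      · simp only [κ, AlgHom.comp_apply, aeval_X, if_pos hp, map_zero, Ideal.Quotient.mkₐ_eq_mk]
        symm
        rw [Ideal.Quotient.eq_zero_iff_mem]
        exact Ideal.subset_span ⟨p, hp, rfl⟩
      · simp [κ, hp]
    have := DFunLike.congr_fun this f
    rw [← Ideal.Quotient.eq]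
    exact this.symm
  have : PW K C W = RingHom.ker (θ.comp (phiC K C')) := by
    apply le_antisymm
    · rw [PW, Submodule.add_eq_sup, sup_le_iff]
      constructor
      · rw [varIdeal, Ideal.span_le]
        rintro _ ⟨p, hp, rfl⟩
        rw [SetLike.mem_coe, RingHom.mem_ker, hcomm]
        simp [κ, hp]
      · intro f hf
        rw [toricIdeal, RingHom.mem_ker] at hf
        rw [RingHom.mem_ker, AlgHom.comp_apply, hf, map_zero]
    · intro f hf
      rw [hcomm, RingHom.mem_ker, AlgHom.comp_apply] at hf
      rw [← sub_add_cancel f (κ f)]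
      exact Submodule.add_mem_sup (hκ f) hf
  rw [this]
  exact RingHom.ker_isPrime _

theorem le_PW (hC : Corner C) {W : Set (Fin m × Fin n)} (hW : Admissible C W) :
    minorIdeal K C ≤ PW K C W := by
  refine minorIdeal_le K hC ?_
  rintro a b ⟨δ, hδ, rfl, rfl⟩
  have hv : ∀ p ∈ W, X p ∈ PW K C W := fun p hp =>
    Ideal.mem_sup_left (Ideal.subset_span ⟨p, hp, rfl⟩)
  rcases hW.2 δ hδ with h | ⟨p, q, hp, hq, h⟩
  · refine Ideal.mem_sup_right (f_mem_toric K (corner_avoid hC W) ⟨δ, ⟨hδ, ?_⟩, rfl, rfl⟩)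
    rw [Set.inter_comm]; exact h
  · simp only [Minor2.IsEdge, Minor2.HorizEdge, Minor2.VertEdge, Set.pair_eq_pair_iff] at h
    rw [(hC δ hδ).1, (hC δ hδ).2] at h
    have hp := hv p hp
    have hq := hv q hq
    rcases h with ((⟨rfl, rfl⟩ | ⟨rfl, rfl⟩) | (⟨rfl, rfl⟩ | ⟨rfl, rfl⟩)) |
      ((⟨rfl, rfl⟩ | ⟨rfl, rfl⟩) | (⟨rfl, rfl⟩ | ⟨rfl, rfl⟩)) <;>
    refine sub_mem ?_ ?_ <;>
    first
    | exact Ideal.mul_mem_left _ _ hp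
    | exact Ideal.mul_mem_left _ _ hq
    | exact Ideal.mul_mem_right _ _ hp
    | exact Ideal.mul_mem_right _ _ hq

/-- Every prime containing `I(C)` contains some `P_W`. -/
theorem exists_PW (hC : Corner C) {P : Ideal (MvPolynomial (Fin m × Fin n) K)}
    (hP : P.IsPrime) (hI : minorIdeal K C ≤ P) : ∃ W, Admissible C W ∧ PW K C W ≤ P := by
  refine ⟨{p | p ∈ vertexSetOf C ∧ X p ∈ P}, ⟨fun p hp => hp.1, ?_⟩, ?_⟩
  · intro δ hδ
    have g := GEdge.intro' hδ
    by_cases h : {p | p ∈ vertexSetOf C ∧ X p ∈ P} ∩ δ.vertexSet = ∅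
    · exact Or.inl h
    · right
      rw [← Ne, ← Set.nonempty_iff_ne_empty] at h
      obtain ⟨p, ⟨hp, hpP⟩, hpδ⟩ := h
      have hf := hI (f_mem K hC g)
      have h00 := g.mem_zero hC
      have h0b := g.mem_row hC
      have ha0 := g.mem_col hC
      have hab := g.mem hC
      have h1 : (X (0, 0) ∈ P ∨ X (δ.a2, δ.b2) ∈ P) ∧ (X (0, δ.b2) ∈ P ∨ X (δ.a2, 0) ∈ P) := by
        rw [← hP.mul_mem_iff_mem_or_mem, ← hP.mul_mem_iff_mem_or_mem]
        have e : (X (0, 0) * X (δ.a2, δ.b2) ∈ P) ↔ (X (0, δ.b2) * X (δ.a2, 0) ∈ P) :=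
          ⟨fun h => by simpa using sub_mem h hf, fun h => by simpa using add_mem hf h⟩
        have : (X (0, 0) * X (δ.a2, δ.b2) ∈ P) ∨ (X (0, δ.b2) * X (δ.a2, 0) ∈ P) := by
          rw [hP.mul_mem_iff_mem_or_mem, hP.mul_mem_iff_mem_or_mem]
          simp only [Minor2.vertexSet, Set.mem_insert_iff, Set.mem_singleton_iff] at hpδ
          rw [(hC δ hδ).1, (hC δ hδ).2] at hpδ
          rcases hpδ with rfl | rfl | rfl | rfl <;> tauto
        tauto
      simp only [Minor2.IsEdge, Minor2.HorizEdge, Minor2.VertEdge]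
      rw [(hC δ hδ).1, (hC δ hδ).2]
      rcases h1 with ⟨h1 | h1, h2 | h2⟩
      · exact ⟨_, _, ⟨h00, h1⟩, ⟨h0b, h2⟩, Or.inr (Or.inl rfl)⟩
      · exact ⟨_, _, ⟨h00, h1⟩, ⟨ha0, h2⟩, Or.inl (Or.inl rfl)⟩
      · exact ⟨_, _, ⟨h0b, h2⟩, ⟨hab, h1⟩, Or.inl (Or.inr rfl)⟩
      · exact ⟨_, _, ⟨ha0, h2⟩, ⟨hab, h1⟩, Or.inr (Or.inr rfl)⟩
  · rw [PW, Submodule.add_eq_sup, sup_le_iff]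
    constructor
    · rw [varIdeal, Ideal.span_le]
      rintro _ ⟨p, hp, rfl⟩
      exact hp.2
    · refine toric_le_prime K (corner_avoid hC _) hP ?_ ?_
      · refine le_trans (Ideal.span_mono ?_) hI
        rintro _ ⟨δ, hδ, rfl⟩
        exact ⟨δ, hδ.1, rfl⟩
      · intro p hp hpP
        have hp' : p ∈ vertexSetOf C := by
          have hp2 := hp
          simp only [vertexSetOf, Set.mem_iUnion] at hp2 ⊢
          obtain ⟨δ, hδ, h⟩ := hp2
          exact ⟨δ, hδ.1, h⟩
        exact not_mem_avoid (W := {p | p ∈ vertexSetOf C ∧ X p ∈ P}) ⟨hp', hpP⟩ hp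

theorem decomposition (hC : Corner C) (hrad : (minorIdeal K C).radical = minorIdeal K C) :
    minorIdeal K C = ⨅ W ∈ {W : Set (Fin m × Fin n) |
          Admissible C W ∧ PW K C W ∈ (minorIdeal K C).minimalPrimes}, PW K C W := by
  apply le_antisymm
  · refine le_iInf₂ fun W hW => le_PW K hC hW.1
  · conv_rhs => rw [← hrad, ← Ideal.sInf_minimalPrimes]
    refine le_sInf fun P hP => ?_
    obtain ⟨W, hW, hWP⟩ := exists_PW K hC hP.1.1 hP.1.2
    have : P = PW K C W := le_antisymm (hP.2 ⟨PW_prime K hC W, le_PW K hC hW⟩ hWP) hWP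
    subst this
    exact iInf₂_le W ⟨hW, hP⟩

/-! ### Cycles -/

/-- There is a cycle avoiding the two intervals through the corner. -/
def HasCycle (C : Set (Minor2 m n)) : Prop :=
  ∃ σ : CycleIn C,
    (∀ k, vClass C (σ.p k) ≠ vClass C ((0 : Fin m), (0 : Fin n))) ∧
    (∀ k, hClass C (σ.p k) ≠ hClass C ((0 : Fin m), (0 : Fin n)))

theorem gEdge_of_class (hC : Corner C) {p : Fin m × Fin n} (hp : p ∈ vertexSetOf C)
    (hv : vClass C p ≠ vClass C (0, 0)) (hh : hClass C p ≠ hClass C (0, 0)) :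
    GEdge C p.1 p.2 := by
  have hz : (0, 0) ∈ vertexSetOf C := by
    obtain ⟨a, b, h, -⟩ := (mem_V hC).1 hp
    exact h.mem_zero hC
  exact gEdge_of_mem hC hp (fun h => hh (hClass_eq hC hp hz h)) (fun h => hv (vClass_eq hC hp hz h))

theorem not_radical (hC : Corner C) (hcyc : HasCycle C) :
    (minorIdeal K C).radical ≠ minorIdeal K C := by
  classical
  obtain ⟨σ, hv, hh⟩ := hcyc
  have gp : ∀ k, GEdge C (σ.p k).1 (σ.p k).2 := fun k =>
    gEdge_of_class hC (σ.p_mem k) (hv k) (hh k)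
  have gq : ∀ k, GEdge C (σ.q k).1 (σ.q k).2 := fun k =>
    gEdge_of_class hC (σ.q_mem k) (σ.shareV k ▸ hv k) ((σ.shareH k).symm ▸ hh (k + 1))
  have rinj : ∀ k l, (σ.p k).1 = (σ.p l).1 → k = l := fun k l h =>
    σ.injH (hClass_eq hC (σ.p_mem k) (σ.p_mem l) h)
  have cinj : ∀ k l, (σ.p k).2 = (σ.p l).2 → k = l := fun k l h =>
    σ.injV (vClass_eq hC (σ.p_mem k) (σ.p_mem l) h)
  have qr : ∀ k, (σ.q k).1 = (σ.p (k + 1)).1 := fun k => fst_eq_of_hClass hC (σ.shareH k)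
  have qc : ∀ k, (σ.q k).2 = (σ.p k).2 := fun k => (snd_eq_of_vClass hC (σ.shareV k)).symm
  let pt : Fin m × Fin n → K := fun x => if ∃ k, x = σ.p k then 1 else 0
  have pt_row : ∀ b, pt (0, b) = 0 := by
    intro b
    refine if_neg ?_
    rintro ⟨k, hk⟩
    exact (gp k).ne_left hC (by rw [← hk])
  have pt_col : ∀ a, pt (a, 0) = 0 := by
    intro a
    refine if_neg ?_
    rintro ⟨k, hk⟩
    exact (gp k).ne_right hC (by rw [← hk])
  let L : MvPolynomial (Fin m × Fin n) K → K := fun f =>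
    eval pt (pderiv (0, 0) f) + ∑ k, eval pt (pderiv (0, (σ.p k).2) (pderiv ((σ.p k).1, 0) f))
  have L_add : ∀ f g, L (f + g) = L f + L g := by
    intro f g
    simp only [L, map_add, Finset.sum_add_distrib]
    ring
  let J : Ideal (MvPolynomial (Fin m × Fin n) K) :=
    { carrier := {f | ∀ u, L (u * f) = 0}
      add_mem' := by
        intro f g hf hg u
        rw [mul_add, L_add, hf, hg, add_zero]
      zero_mem' := by
        intro u
        simp [L]
      smul_mem' := by
        intro c f hf u
        rw [smul_eq_mul, ← mul_assoc]
        exact hf _ }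
  have hIJ : minorIdeal K C ≤ J := by
    refine minorIdeal_le K hC ?_
    intro a b hab u
    have ha := hab.ne_left hC
    have hb := hab.ne_right hC
    have e1 : eval pt (pderiv (0, 0) (u * (X (0, 0) * X (a, b) - X (0, b) * X (a, 0))))
        = eval pt u * pt (a, b) := by
      simp [pderiv_mul, pderiv_X, Pi.single_apply, pt_row, pt_col, ha, hb]
    have e2 : ∀ k, eval pt (pderiv (0, (σ.p k).2) (pderiv ((σ.p k).1, 0)
        (u * (X (0, 0) * X (a, b) - X (0, b) * X (a, 0)))))
        = - (eval pt u * (if (a, b) = σ.p k then 1 else 0)) := by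
      intro k
      have ha' := (gp k).ne_left hC
      have hb' := (gp k).ne_right hC
      by_cases h1 : a = (σ.p k).1 <;> by_cases h2 : b = (σ.p k).2 <;>
        simp [pderiv_mul, pderiv_X, Pi.single_apply, pt_row, pt_col, ha, hb, ha', hb', h1, h2,
          Prod.ext_iff, ha'.symm, hb'.symm]
    simp only [L]
    rw [e1, Finset.sum_congr rfl fun k _ => e2 k, Finset.sum_neg_distrib, ← Finset.mul_sum,
      ← sub_eq_add_neg, ← mul_sub]
    have : pt (a, b) = ∑ k, if (a, b) = σ.p k then (1 : K) else 0 := by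
      by_cases h : ∃ k, (a, b) = σ.p k
      · obtain ⟨k, hk⟩ := h
        rw [Finset.sum_eq_single k]
        · simp only [pt]
          rw [if_pos ⟨k, hk⟩, if_pos hk]
        · intro l _ hl
          refine if_neg fun h => hl ?_
          exact rinj _ _ (by rw [← h, ← hk])
        · simp
      · simp only [pt]
        rw [if_neg h, Finset.sum_eq_zero]
        intro k _
        exact if_neg fun hk => h ⟨k, hk⟩
    rw [this, sub_self, mul_zero]
  intro hrad
  have hnot : X (0, 0) * cycleBinom K σ ∉ minorIdeal K C := by
    intro hmem
    have h0 := hIJ hmem 1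
    rw [one_mul] at h0
    have e2 : ∀ k, eval pt (pderiv (0, (σ.p k).2) (pderiv ((σ.p k).1, 0)
        (X (0, 0) * cycleBinom K σ))) = 0 := by
      intro k
      have ha' := (gp k).ne_left hC
      have hb' := (gp k).ne_right hC
      simp [pderiv_mul, pderiv_X, Pi.single_apply, pt_row, ha', hb', ha'.symm, hb'.symm]
    have e1 : eval pt (pderiv (0, 0) (X (0, 0) * cycleBinom K σ)) = 1 := by
      simp only [pderiv_mul, pderiv_X_self, map_add, map_mul, eval_X, pt_row, map_one, one_mul,
        zero_mul, add_zero, cycleBinom, map_sub, map_prod]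
      rw [Finset.prod_eq_one fun k _ => if_pos ⟨k, rfl⟩,
        Finset.prod_eq_zero (Finset.mem_univ 0), sub_zero]
      refine if_neg ?_
      rintro ⟨l, hl⟩
      have h1 := rinj l (0 + 1) (by rw [← hl, qr])
      have h2 := cinj l 0 (by rw [← hl, qc])
      rw [h2, zero_add] at h1
      exact absurd h1 (by simp)
    simp only [L] at h0
    rw [e1, Finset.sum_eq_zero fun k _ => e2 k] at h0
    simp at h0
  apply hnot
  rw [← hrad]
  refine ⟨σ.len + 2, ?_⟩
  have hz : X (0, 0) ^ (σ.len + 2) * cycleBinom K σ ∈ minorIdeal K C := by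
    rw [← Ideal.Quotient.eq_zero_iff_mem]
    have hf : ∀ {a b}, GEdge C a b → Ideal.Quotient.mk (minorIdeal K C) (X (0, 0))
        * Ideal.Quotient.mk (minorIdeal K C) (X (a, b)) =
        Ideal.Quotient.mk (minorIdeal K C) (X (0, b)) *
          Ideal.Quotient.mk (minorIdeal K C) (X (a, 0)) := by
      intro a b h
      rw [← map_mul, ← map_mul, Ideal.Quotient.eq]
      exact f_mem K hC h
    rw [cycleBinom, mul_sub, map_sub, sub_eq_zero, map_mul, map_mul, map_prod, map_prod, map_pow]
    have e : ∀ g : Fin (σ.len + 2) → MvPolynomial (Fin m × Fin n) K ⧸ minorIdeal K C,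
        (Ideal.Quotient.mk (minorIdeal K C) (X (0, 0))) ^ (σ.len + 2) * ∏ k, g k =
        ∏ k, (Ideal.Quotient.mk (minorIdeal K C) (X (0, 0)) * g k) := by
      intro g
      rw [Finset.prod_mul_distrib]
      simp
    rw [e, e, Finset.prod_congr rfl fun k _ => hf (gp k),
      Finset.prod_congr rfl fun k _ => hf (gq k), Finset.prod_mul_distrib, Finset.prod_mul_distrib]
    congr 1
    · simp only [qc]
    · simp only [qr]
      exact (Equiv.prod_comp (Equiv.addRight (1 : Fin (σ.len + 2))) (fun k =>
        Ideal.Quotient.mk (minorIdeal K C) (X ((σ.p k).1, 0)))).symm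
  have : (X (0, 0) * cycleBinom K σ) ^ (σ.len + 2) =
      cycleBinom K σ ^ (σ.len + 1) * (X (0, 0) ^ (σ.len + 2) * cycleBinom K σ) := by ring
  rw [this]
  exact Ideal.mul_mem_left _ _ hz

theorem mkCycle (hC : Corner C) (α : ℕ → Fin m) (β : ℕ → Fin n) (r : ℕ) (hr : 2 ≤ r)
    (h0 : α r = α 0) (h1 : ∀ k < r, GEdge C (α k) (β k)) (h2 : ∀ k < r, GEdge C (α (k + 1)) (β k))
    (ia : ∀ k < r, ∀ l < r, α k = α l → k = l) (ib : ∀ k < r, ∀ l < r, β k = β l → k = l) :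
    HasCycle C := by
  obtain ⟨len, rfl⟩ : ∃ len, r = len + 2 := ⟨r - 2, by omega⟩
  refine ⟨{ len := len
            p := fun k => (α k, β k)
            q := fun k => (α (k + 1), β k)
            p_mem := fun k => (h1 k k.2).mem hC
            q_mem := fun k => (h2 k k.2).mem hC
            shareV := fun k => vClass_eq hC ((h1 k k.2).mem hC) ((h2 k k.2).mem hC) rfl
            shareH := fun k => hClass_eq hC ((h2 k k.2).mem hC) ((h1 _ (k + 1).2).mem hC) ?_
            injH := fun k l h => Fin.ext (ia k k.2 l l.2 (fst_eq_of_hClass hC h))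
            injV := fun k l h => Fin.ext (ib k k.2 l l.2 (snd_eq_of_vClass hC h)) }, ?_, ?_⟩
  · simp only
    rw [Fin.val_add_one]
    split_ifs with h
    · rw [h]
      exact h0
    · rfl
  · intro k h
    exact (h1 k k.2).ne_right hC (snd_eq_of_vClass hC h)
  · intro k h
    exact (h1 k k.2).ne_left hC (fst_eq_of_hClass hC h)

theorem exists_leaf (hC : Corner C) (hno : ¬ HasCycle C) (E : Set (Fin m × Fin n))
    (hE : ∀ p ∈ E, GEdge C p.1 p.2) (hne : E.Nonempty) :
    ∃ p ∈ E, (∀ q ∈ E, q.2 = p.2 → q = p) ∨ (∀ q ∈ E, q.1 = p.1 → q = p) := by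
  classical
  by_contra hcon
  push Not at hcon
  have hf : ∀ p : E, ∃ q : E, q.1.2 = p.1.2 ∧ q.1.1 ≠ p.1.1 := by
    intro p
    obtain ⟨q, hq, h1, h2⟩ := (hcon p p.2).1
    exact ⟨⟨q, hq⟩, h1, fun h => h2 (Prod.ext h h1)⟩
  have hg : ∀ p : E, ∃ q : E, q.1.1 = p.1.1 ∧ q.1.2 ≠ p.1.2 := by
    intro p
    obtain ⟨q, hq, h1, h2⟩ := (hcon p p.2).2
    exact ⟨⟨q, hq⟩, h1, fun h => h2 (Prod.ext h1 h)⟩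
  choose f hf1 hf2 using hf
  choose g hg1 hg2 using hg
  obtain ⟨p0, hp0⟩ := hne
  let s : ℕ → E := fun k => (g ∘ f)^[k] ⟨p0, hp0⟩
  have hs : ∀ k, s (k + 1) = g (f (s k)) := fun k => Function.iterate_succ_apply' _ _ _
  let a : ℕ → Fin m := fun k => (s k).1.1
  let b : ℕ → Fin n := fun k => (s k).1.2
  have h1 : ∀ k, GEdge C (a k) (b k) := fun k => hE _ (s k).2
  have ha' : ∀ k, a (k + 1) = (f (s k)).1.1 := fun k => by
    simp only [a]; rw [hs, hg1]
  have h2 : ∀ k, GEdge C (a (k + 1)) (b k) := fun k => by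
    rw [ha']
    simp only [b]
    rw [← hf1]
    exact hE _ (f (s k)).2
  have ha : ∀ k, a (k + 1) ≠ a k := fun k => by
    rw [ha']; exact hf2 _
  have hb : ∀ k, b (k + 1) ≠ b k := fun k => by
    simp only [b]; rw [hs, ← hf1 (s k)]; exact hg2 _
  have hex : ∃ d, 1 ≤ d ∧ ∃ i, a i = a (i + d) ∨ b i = b (i + d) := by
    obtain ⟨i, j, hij, h⟩ := Finite.exists_ne_map_eq_of_infinite s
    rcases lt_or_gt_of_ne hij with h' | h'
    · refine ⟨j - i, by omega, i, Or.inl ?_⟩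
      rw [Nat.add_sub_cancel' h'.le]
      simp only [a]; rw [h]
    · refine ⟨i - j, by omega, j, Or.inl ?_⟩
      rw [Nat.add_sub_cancel' h'.le]
      simp only [a]; rw [h]
  obtain ⟨hd1, i, hi⟩ := Nat.find_spec hex
  have hmin : ∀ e, 1 ≤ e → e < Nat.find hex → ∀ i, a i ≠ a (i + e) ∧ b i ≠ b (i + e) := by
    intro e he1 he2 i
    have := Nat.find_min hex he2
    push Not at this
    exact this he1 i
  generalize Nat.find hex = d at *
  have hd2 : 2 ≤ d := by
    by_contra hlt
    have : d = 1 := by omega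
    subst this
    rcases hi with hi | hi
    · exact ha i hi.symm
    · exact hb i hi.symm
  have ia : ∀ c k, k < d → ∀ l < d, a (c + k) = a (c + l) → k = l := by
    intro c k hk l hl h
    by_contra hkl
    rcases lt_or_gt_of_ne hkl with h' | h'
    · refine (hmin (l - k) (by omega) (by omega) (c + k)).1 ?_
      rw [h]; congr 1; omega
    · refine (hmin (k - l) (by omega) (by omega) (c + l)).1 ?_
      rw [← h]; congr 1; omega
  have ib : ∀ c k, k < d → ∀ l < d, b (c + k) = b (c + l) → k = l := by
    intro c k hk l hl h
    by_contra hkl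
    rcases lt_or_gt_of_ne hkl with h' | h'
    · refine (hmin (l - k) (by omega) (by omega) (c + k)).2 ?_
      rw [h]; congr 1; omega
    · refine (hmin (k - l) (by omega) (by omega) (c + l)).2 ?_
      rw [← h]; congr 1; omega
  apply hno
  rcases hi with hi | hi
  · exact mkCycle hC (fun k => a (i + k)) (fun k => b (i + k)) d hd2 hi.symm (fun k _ => h1 _)
      (fun k _ => h2 _) (ia i) (ib i)
  · refine mkCycle hC (fun k => if k = d then a (i + 1) else a (i + 1 + k))
      (fun k => b (i + 1 + k)) d hd2 ?_ ?_ ?_ ?_ (ib _)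
    · have : (0 : ℕ) ≠ d := by omega
      simp [this]
    · intro k hk
      simp only [if_neg hk.ne]
      exact h1 _
    · intro k hk
      by_cases h : k + 1 = d
      · simp only [if_pos h]
        have : i + 1 + k = i + d := by omega
        rw [this, ← hi]
        exact h2 i
      · simp only [if_neg h]
        exact h2 (i + 1 + k)
    · intro k hk l hl h
      simp only [if_neg hk.ne, if_neg hl.ne] at h
      exact ia _ k hk l hl h

/-! ### The forest case -/

theorem exists_of_mapDomain {α β : Type*} {f : α → β} {u v : α →₀ ℕ}
    (h : u.mapDomain f = v.mapDomain f) {p : α} (hp : u p ≠ 0) : ∃ q, v q ≠ 0 ∧ f q = f p := by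
  classical
  by_contra hcon
  push Not at hcon
  have h1 : v.mapDomain f (f p) = 0 := by
    rw [Finsupp.mapDomain, Finsupp.sum_apply, Finsupp.sum]
    refine Finset.sum_eq_zero fun q hq => ?_
    rw [Finsupp.single_apply, if_neg (hcon q (Finsupp.mem_support_iff.1 hq))]
  rw [← h, Finsupp.mapDomain, Finsupp.sum_apply, Finsupp.sum, Finset.sum_eq_zero_iff] at h1
  have := h1 p (Finsupp.mem_support_iff.2 hp)
  simp at this
  exact hp this

/-- Two exponents have the same toric multidegree. -/
def Same (C : Set (Minor2 m n)) (u v : (Fin m × Fin n) →₀ ℕ) : Prop :=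
  u.mapDomain (hClass C) = v.mapDomain (hClass C) ∧ u.mapDomain (vClass C) = v.mapDomain (vClass C)

/-- Two monomials agree modulo `I(C) : x₀₀`. -/
def Rz (C : Set (Minor2 m n)) (u v : (Fin m × Fin n) →₀ ℕ) : Prop :=
  X (0, 0) * (monomial u 1 - monomial v 1 : MvPolynomial (Fin m × Fin n) K) ∈ minorIdeal K C

theorem Same.symm {u v : (Fin m × Fin n) →₀ ℕ} (h : Same C u v) : Same C v u :=
  ⟨h.1.symm, h.2.symm⟩

theorem Same.trans {u v w : (Fin m × Fin n) →₀ ℕ} (h : Same C u v) (h' : Same C v w) :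
    Same C u w := ⟨h.1.trans h'.1, h.2.trans h'.2⟩

theorem Rz.symm {u v : (Fin m × Fin n) →₀ ℕ} (h : Rz K C u v) : Rz K C v u := by
  unfold Rz at *
  have := neg_mem h
  rwa [← mul_neg, neg_sub] at this

theorem Rz.trans {u v w : (Fin m × Fin n) →₀ ℕ} (h : Rz K C u v) (h' : Rz K C v w) :
    Rz K C u w := by
  unfold Rz at *
  have := add_mem h h'
  rwa [← mul_add, sub_add_sub_cancel] at this

theorem Rz.add {u v : (Fin m × Fin n) →₀ ℕ} (h : Rz K C u v) (t : (Fin m × Fin n) →₀ ℕ) :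
    Rz K C (t + u) (t + v) := by
  unfold Rz at *
  have := Ideal.mul_mem_left _ (monomial t 1) h
  have e : ∀ u : (Fin m × Fin n) →₀ ℕ, (monomial (t + u) 1 : MvPolynomial (Fin m × Fin n) K) =
      monomial t 1 * monomial u 1 := fun u => by rw [monomial_mul, one_mul]
  rw [e, e]
  convert this using 1
  ring

theorem monomial_two (p q : Fin m × Fin n) :
    (monomial (Finsupp.single p 1 + Finsupp.single q 1) 1 : MvPolynomial (Fin m × Fin n) K) =
      X p * X q := by
  rw [X, X, monomial_mul, one_mul]

/-- The basic exchange of two opposite corners of a rectangle. -/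
theorem swap (hC : Corner C) {a : Fin m} {b : Fin n} {p q p' q' : Fin m × Fin n}
    {v : (Fin m × Fin n) →₀ ℕ} (hpq : p ≠ q) (hp : v p ≠ 0) (hq : v q ≠ 0)
    (hmem : p ∈ vertexSetOf C ∧ q ∈ vertexSetOf C ∧ p' ∈ vertexSetOf C ∧ q' ∈ vertexSetOf C)
    (e1 : p.1 = p'.1) (e2 : q.1 = q'.1) (e3 : p.2 = q'.2) (e4 : q.2 = p'.2) (e5 : q' = (a, b))
    (hz : (X (0, 0) * (X p * X q - X p' * X q') : MvPolynomial (Fin m × Fin n) K)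
      ∈ minorIdeal K C) :
    ∃ v', Same C v v' ∧ Rz K C v v' ∧ v' (a, b) ≠ 0 ∧ v'.degree = v.degree := by
  classical
  obtain ⟨mp, mq, mp', mq'⟩ := hmem
  have hle : Finsupp.single p 1 + Finsupp.single q 1 ≤ v := by
    intro x
    simp only [Finsupp.add_apply, Finsupp.single_apply]
    split_ifs with h1 h2 h2
    · exact absurd (h1.trans h2.symm) hpq
    · subst h1; omega
    · subst h2; omega
    · omega
  obtain ⟨t, rfl⟩ : ∃ t, v = t + (Finsupp.single p 1 + Finsupp.single q 1) :=
    ⟨v - _, (tsub_add_cancel_of_le hle).symm⟩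
  refine ⟨t + (Finsupp.single p' 1 + Finsupp.single q' 1), ⟨?_, ?_⟩, Rz.add K ?_ t, ?_, ?_⟩
  · simp only [Finsupp.mapDomain_add, Finsupp.mapDomain_single]
    rw [hClass_eq hC mp mp' e1, hClass_eq hC mq mq' e2]
  · simp only [Finsupp.mapDomain_add, Finsupp.mapDomain_single]
    rw [vClass_eq hC mp mq' e3, vClass_eq hC mq mp' e4, add_comm (Finsupp.single _ 1)]
  · unfold Rz
    rw [monomial_two, monomial_two]
    exact hz
  · subst e5
    simp
  · simp only [map_add, Finsupp.degree_single]

theorem col_step (hC : Corner C) {u v : (Fin m × Fin n) →₀ ℕ} (hs : Same C u v)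
    {a : Fin m} {b : Fin n} (hab : GEdge C a b) (hu : u (a, b) ≠ 0) (hv : v (a, b) = 0)
    (hleaf : ∀ a', GEdge C a' b → v (a', b) ≠ 0 → a' = a) :
    ∃ v', Same C v v' ∧ Rz K C v v' ∧ v' (a, b) ≠ 0 ∧ v'.degree = v.degree := by
  have ha0 := hab.ne_left hC
  have hb0 := hab.ne_right hC
  obtain ⟨⟨a1, b1⟩, hv1, hc1⟩ := exists_of_mapDomain hs.2 hu
  have m1 := mem_of_vClass hC hc1.symm (hab.mem hC)
  obtain rfl : b1 = b := snd_eq_of_vClass hC hc1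
  have ha1 : a1 = 0 := by
    by_contra hne
    have := hleaf a1 (gEdge_of_mem hC m1 hne hb0) hv1
    subst this
    exact hv1 hv
  subst ha1
  obtain ⟨⟨a2, b2⟩, hv2, hc2⟩ := exists_of_mapDomain hs.1 hu
  have m2 := mem_of_hClass hC hc2.symm (hab.mem hC)
  obtain rfl : a2 = a := fst_eq_of_hClass hC hc2
  have m3 : ((0 : Fin m), b2) ∈ vertexSetOf C := by
    by_cases h : b2 = 0
    · rw [h]; exact hab.mem_zero hC
    · exact (gEdge_of_mem hC m2 ha0 h).mem_row hC
  refine swap K hC (p := (0, b1)) (q := (a2, b2)) (p' := (0, b2)) (q' := (a2, b1))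
    (fun h => ha0 (congrArg Prod.fst h).symm) hv1 hv2 ⟨m1, m2, m3, hab.mem hC⟩ rfl rfl rfl rfl rfl ?_
  by_cases h : b2 = 0
  · subst h
    have := Ideal.mul_mem_left _ (-X (0, 0)) (f_mem K hC hab)
    convert this using 1
    ring
  · have h1 := Ideal.mul_mem_left _ (X (0, b1)) (f_mem K hC (gEdge_of_mem hC m2 ha0 h))
    have h2 := Ideal.mul_mem_left _ (X (0, b2)) (f_mem K hC hab)
    convert sub_mem h1 h2 using 1
    ring

theorem row_step (hC : Corner C) {u v : (Fin m × Fin n) →₀ ℕ} (hs : Same C u v)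
    {a : Fin m} {b : Fin n} (hab : GEdge C a b) (hu : u (a, b) ≠ 0) (hv : v (a, b) = 0)
    (hleaf : ∀ b', GEdge C a b' → v (a, b') ≠ 0 → b' = b) :
    ∃ v', Same C v v' ∧ Rz K C v v' ∧ v' (a, b) ≠ 0 ∧ v'.degree = v.degree := by
  have ha0 := hab.ne_left hC
  have hb0 := hab.ne_right hC
  obtain ⟨⟨a1, b1⟩, hv1, hc1⟩ := exists_of_mapDomain hs.1 hu
  have m1 := mem_of_hClass hC hc1.symm (hab.mem hC)
  obtain rfl : a1 = a := fst_eq_of_hClass hC hc1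
  have hb1 : b1 = 0 := by
    by_contra hne
    have := hleaf b1 (gEdge_of_mem hC m1 ha0 hne) hv1
    subst this
    exact hv1 hv
  subst hb1
  obtain ⟨⟨a2, b2⟩, hv2, hc2⟩ := exists_of_mapDomain hs.2 hu
  have m2 := mem_of_vClass hC hc2.symm (hab.mem hC)
  obtain rfl : b2 = b := snd_eq_of_vClass hC hc2
  have m3 : (a2, (0 : Fin n)) ∈ vertexSetOf C := by
    by_cases h : a2 = 0
    · rw [h]; exact hab.mem_zero hC
    · exact (gEdge_of_mem hC m2 h hb0).mem_col hC
  refine swap K hC (p := (a2, b2)) (q := (a1, 0)) (p' := (a2, 0)) (q' := (a1, b2))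
    (fun h => hb0 (congrArg Prod.snd h)) hv2 hv1 ⟨m2, m1, m3, hab.mem hC⟩ rfl rfl rfl rfl rfl ?_
  by_cases h : a2 = 0
  · subst h
    have := Ideal.mul_mem_left _ (-X (0, 0)) (f_mem K hC hab)
    convert this using 1
    ring
  · have h1 := Ideal.mul_mem_left _ (X (a1, 0)) (f_mem K hC (gEdge_of_mem hC m2 h hb0))
    have h2 := Ideal.mul_mem_left _ (X (a2, 0)) (f_mem K hC hab)
    convert sub_mem h1 h2 using 1
    ring

/-- Without edge variables, exponents of the same multidegree share a variable. -/
theorem share_of_no_edge (hC : Corner C) {u v : (Fin m × Fin n) →₀ ℕ} (hs : Same C u v)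
    (hno : ∀ a b, GEdge C a b → u (a, b) = 0 ∧ v (a, b) = 0) (hu : u ≠ 0) :
    ∃ p, u p ≠ 0 ∧ v p ≠ 0 := by
  have off : ∀ {u v : (Fin m × Fin n) →₀ ℕ}, Same C u v →
      (∀ a b, GEdge C a b → u (a, b) = 0 ∧ v (a, b) = 0) → ∀ p, u p ≠ 0 → p ≠ (0, 0) →
      v p ≠ 0 := by
    rintro u v hs hno ⟨a, b⟩ hp hne
    by_cases hb : b = 0
    · subst hb
      have ha : a ≠ 0 := fun h => hne (by rw [h])
      obtain ⟨⟨a', b'⟩, hq, hc⟩ := exists_of_mapDomain hs.1 hp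
      rcases of_hClass_eq hC hc with h | ⟨h1, h2, h3⟩
      · rwa [← h]
      · simp only at h3
        subst h3
        by_cases hb' : b' = 0
        · rwa [← hb']
        · exact absurd (hno _ _ (gEdge_of_mem hC h1 ha hb')).2 hq
    · obtain ⟨⟨a', b'⟩, hq, hc⟩ := exists_of_mapDomain hs.2 hp
      rcases of_vClass_eq hC hc with h | ⟨h1, h2, h3⟩
      · rwa [← h]
      · simp only at h3
        subst h3
        by_cases ha : a = 0
        · by_cases ha' : a' = 0
          · rw [ha, ← ha']; exact hq
          · exact absurd (hno _ _ (gEdge_of_mem hC h1 ha' hb)).2 hq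
        · exact absurd (hno _ _ (gEdge_of_mem hC h2 ha hb)).1 hp
  obtain ⟨p, hp⟩ := Finsupp.ne_iff.1 hu
  rw [Finsupp.zero_apply] at hp
  by_cases h : p = (0, 0)
  · subst h
    obtain ⟨q, hq, -⟩ := exists_of_mapDomain hs.1 hp
    by_cases h' : q = (0, 0)
    · subst h'
      exact ⟨_, hp, hq⟩
    · exact ⟨q, off hs.symm (fun a b h => (hno a b h).symm) q hq h', hq⟩
  · exact ⟨p, hp, off hs hno p hp h⟩

theorem degree_same {u v : (Fin m × Fin n) →₀ ℕ} (hs : Same C u v) (hu : u = 0) : v = 0 := by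
  by_contra hne
  obtain ⟨p, hp⟩ := Finsupp.ne_iff.1 hne
  obtain ⟨q, hq, -⟩ := exists_of_mapDomain hs.1.symm hp
  simp [hu] at hq

theorem same_Rz (hC : Corner C) (hno : ¬ HasCycle C) : ∀ (N : ℕ) (u v : (Fin m × Fin n) →₀ ℕ),
    u.degree = N → v.degree = N → Same C u v → Rz K C u v := by
  classical
  intro N
  induction N with
  | zero =>
    intro u v hu hv _
    rw [Finsupp.degree_eq_zero_iff] at hu hv
    subst hu hv
    simp [Rz]
  | succ N ih =>
    have share : ∀ (u v : (Fin m × Fin n) →₀ ℕ) p, u.degree = N + 1 → v.degree = N + 1 →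
        Same C u v → u p ≠ 0 → v p ≠ 0 → Rz K C u v := by
      intro u v p hu hv hs hup hvp
      obtain ⟨u', rfl⟩ : ∃ t, u = Finsupp.single p 1 + t :=
        ⟨u - Finsupp.single p 1, (add_tsub_cancel_of_le
          (by rw [Finsupp.single_le_iff]; omega)).symm⟩
      obtain ⟨v', rfl⟩ : ∃ t, v = Finsupp.single p 1 + t :=
        ⟨v - Finsupp.single p 1, (add_tsub_cancel_of_le
          (by rw [Finsupp.single_le_iff]; omega)).symm⟩
      simp only [map_add, Finsupp.degree_single] at hu hv
      refine Rz.add K (ih u' v' (by omega) (by omega) ⟨?_, ?_⟩) _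
      · have := hs.1
        simpa only [Finsupp.mapDomain_add, add_right_inj] using this
      · have := hs.2
        simpa only [Finsupp.mapDomain_add, add_right_inj] using this
    intro u v hu hv hs
    by_cases hsh : ∃ p, u p ≠ 0 ∧ v p ≠ 0
    · obtain ⟨p, h1, h2⟩ := hsh
      exact share u v p hu hv hs h1 h2
    by_cases hE : ({p | GEdge C p.1 p.2 ∧ (u p ≠ 0 ∨ v p ≠ 0)} : Set (Fin m × Fin n)).Nonempty
    · obtain ⟨⟨a, b⟩, ⟨hab, huv⟩, hleaf⟩ := exists_leaf hC hno _ (fun p hp => hp.1) hE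
      have main : ∀ u v : (Fin m × Fin n) →₀ ℕ, u.degree = N + 1 → v.degree = N + 1 →
          Same C u v → (¬ ∃ p, u p ≠ 0 ∧ v p ≠ 0) → u (a, b) ≠ 0 →
          ((∀ a', GEdge C a' b → v (a', b) ≠ 0 → a' = a) ∨
            (∀ b', GEdge C a b' → v (a, b') ≠ 0 → b' = b)) → Rz K C u v := by
        intro u v hu hv hs hsh hup hl
        have hvp : v (a, b) = 0 := by
          by_contra h
          exact hsh ⟨_, hup, h⟩
        obtain ⟨v', h1, h2, h3, h4⟩ : ∃ v', Same C v v' ∧ Rz K C v v' ∧ v' (a, b) ≠ 0 ∧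
            v'.degree = v.degree := by
          rcases hl with hl | hl
          · exact col_step K hC hs hab hup hvp hl
          · exact row_step K hC hs hab hup hvp hl
        exact (share u v' _ hu (h4.trans hv) (hs.trans h1) hup h3).trans K h2.symm
      rcases huv with huv | huv
      · refine main u v hu hv hs hsh huv ?_
        rcases hleaf with hl | hl
        · exact Or.inl fun a' h h' => congrArg Prod.fst (hl (a', b) ⟨h, Or.inr h'⟩ rfl)
        · exact Or.inr fun b' h h' => congrArg Prod.snd (hl (a, b') ⟨h, Or.inr h'⟩ rfl)
      · refine (main v u hv hu hs.symm (fun ⟨p, h1, h2⟩ => hsh ⟨p, h2, h1⟩) huv ?_).symm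
        rcases hleaf with hl | hl
        · exact Or.inl fun a' h h' => congrArg Prod.fst (hl (a', b) ⟨h, Or.inl h'⟩ rfl)
        · exact Or.inr fun b' h h' => congrArg Prod.snd (hl (a, b') ⟨h, Or.inl h'⟩ rfl)
    · have hu0 : u ≠ 0 := by
        rintro rfl
        simp at hu
      refine absurd (share_of_no_edge hC hs ?_ hu0) hsh
      intro a b hab
      constructor
      · by_contra h
        exact hE ⟨(a, b), hab, Or.inl h⟩
      · by_contra h
        exact hE ⟨(a, b), hab, Or.inr h⟩

/-- The exponent of the image of a monomial under `φ`. -/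
noncomputable def expT (C : Set (Minor2 m n)) (u : (Fin m × Fin n) →₀ ℕ) :
    (Quot (horizAdj C) ⊕ Quot (vertAdj C)) →₀ ℕ :=
  u.mapDomain (fun p => Sum.inl (hClass C p)) + u.mapDomain (fun p => Sum.inr (vClass C p))

theorem phi_monomial (u : (Fin m × Fin n) →₀ ℕ) :
    phiC K C (monomial u 1) = monomial (expT C u) 1 := by
  induction u using Finsupp.induction_linear with
  | zero => simp [expT]
  | add u v hu hv =>
    have e : expT C (u + v) = expT C u + expT C v := by
      simp only [expT, Finsupp.mapDomain_add]
      abel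
    have e1 : (monomial (u + v) 1 : MvPolynomial (Fin m × Fin n) K) =
        monomial u 1 * monomial v 1 := by rw [monomial_mul, one_mul]
    rw [e, e1, map_mul, hu, hv, monomial_mul, one_mul]
  | single p k =>
    have e1 : (monomial (Finsupp.single p k) 1 : MvPolynomial (Fin m × Fin n) K) = X p ^ k := by
      rw [X_pow_eq_monomial]
    rw [e1, map_pow, phi_X, mul_pow, X_pow_eq_monomial, X_pow_eq_monomial, monomial_mul, one_mul]
    simp [expT, Finsupp.mapDomain_single]

theorem same_of_expT {u v : (Fin m × Fin n) →₀ ℕ} (h : expT C u = expT C v) : Same C u v := by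
  have hl : ∀ (u : (Fin m × Fin n) →₀ ℕ) x, expT C u (Sum.inl x) = u.mapDomain (hClass C) x := by
    intro u x
    rw [expT, Finsupp.add_apply]
    have e1 : u.mapDomain (fun p => (Sum.inl (hClass C p) : Quot (horizAdj C) ⊕ Quot (vertAdj C)))
        = (u.mapDomain (hClass C)).mapDomain Sum.inl := by
      rw [← Finsupp.mapDomain_comp]; rfl
    have e2 : u.mapDomain (fun p => (Sum.inr (vClass C p) : Quot (horizAdj C) ⊕ Quot (vertAdj C)))
        = (u.mapDomain (vClass C)).mapDomain Sum.inr := by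
      rw [← Finsupp.mapDomain_comp]; rfl
    rw [e1, e2, Finsupp.mapDomain_apply Sum.inl_injective,
      Finsupp.mapDomain_of_notMem_range (f := Sum.inr) _ _ (by simp), add_zero]
  have hr : ∀ (u : (Fin m × Fin n) →₀ ℕ) x, expT C u (Sum.inr x) = u.mapDomain (vClass C) x := by
    intro u x
    rw [expT, Finsupp.add_apply]
    have e1 : u.mapDomain (fun p => (Sum.inl (hClass C p) : Quot (horizAdj C) ⊕ Quot (vertAdj C)))
        = (u.mapDomain (hClass C)).mapDomain Sum.inl := by
      rw [← Finsupp.mapDomain_comp]; rfl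
    have e2 : u.mapDomain (fun p => (Sum.inr (vClass C p) : Quot (horizAdj C) ⊕ Quot (vertAdj C)))
        = (u.mapDomain (vClass C)).mapDomain Sum.inr := by
      rw [← Finsupp.mapDomain_comp]; rfl
    rw [e1, e2, Finsupp.mapDomain_apply Sum.inr_injective,
      Finsupp.mapDomain_of_notMem_range (f := Sum.inl) _ _ (by simp), zero_add]
  constructor
  · ext x
    rw [← hl, ← hl, h]
  · ext x
    rw [← hr, ← hr, h]

theorem degree_eq_of_same {u v : (Fin m × Fin n) →₀ ℕ} (h : Same C u v) :
    u.degree = v.degree := by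
  rw [← Finsupp.degree_mapDomain (hClass C) u, h.1, Finsupp.degree_mapDomain]

/-- For a forest, `x₀₀ J ⊆ I`. -/
theorem z_toric_le (hC : Corner C) (hno : ¬ HasCycle C) {f : MvPolynomial (Fin m × Fin n) K}
    (hf : f ∈ toricIdeal K C) : X (0, 0) * f ∈ minorIdeal K C := by
  classical
  let π : MvPolynomial (Fin m × Fin n) K →ₗ[K] (MvPolynomial (Fin m × Fin n) K ⧸ minorIdeal K C) :=
    (Ideal.Quotient.mkₐ K (minorIdeal K C)).toLinearMap ∘ₗ LinearMap.mulLeft K (X (0, 0))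
  let ρ : MvPolynomial (Quot (horizAdj C) ⊕ Quot (vertAdj C)) K →ₗ[K]
      (MvPolynomial (Fin m × Fin n) K ⧸ minorIdeal K C) :=
    (basisMonomials _ K).constr K fun w =>
      if h : ∃ u, expT C u = w then π (monomial h.choose 1) else 0
  have key : ρ ∘ₗ (phiC K C).toLinearMap = π := by
    refine (basisMonomials _ K).ext fun u => ?_
    have hex : ∃ u', expT C u' = expT C u := ⟨u, rfl⟩
    have e : ρ (monomial (expT C u) 1) = π (monomial hex.choose 1) := by
      have := (basisMonomials (Quot (horizAdj C) ⊕ Quot (vertAdj C)) K).constr_basis K (fun w =>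
        if h : ∃ u, expT C u = w then π (monomial h.choose 1) else 0) (expT C u)
      rw [coe_basisMonomials] at this
      refine this.trans ?_
      rw [dif_pos hex]
    rw [coe_basisMonomials, LinearMap.comp_apply, AlgHom.toLinearMap_apply, phi_monomial, e]
    have hs := same_of_expT hex.choose_spec
    have hR := same_Rz K hC hno _ _ _ rfl (degree_eq_of_same hs).symm hs
    rw [← sub_eq_zero, ← map_sub]
    exact Ideal.Quotient.eq_zero_iff_mem.2 hR
  rw [toricIdeal, RingHom.mem_ker] at hf
  have : π f = 0 := by
    rw [← key, LinearMap.comp_apply, AlgHom.toLinearMap_apply, hf, map_zero]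
  exact Ideal.Quotient.eq_zero_iff_mem.1 this

/-- The ideal `I(C) + (x₀₀)` is radical. -/
theorem sup_radical (hC : Corner C) {f : MvPolynomial (Fin m × Fin n) K} {N : ℕ}
    (hf : f ^ N ∈ minorIdeal K C) : f ∈ minorIdeal K C ⊔ Ideal.span {X (0, 0)} := by
  classical
  rw [f.as_sum]
  refine sum_mem fun u hu => ?_
  set Q := minorIdeal K C ⊔ Ideal.span {X (0, 0)} with hQ
  have hz : X (0, 0) ∈ Q := Ideal.mem_sup_right (Ideal.subset_span rfl)
  have hdvd : ∀ (g : MvPolynomial (Fin m × Fin n) K) t, t ≤ u → monomial t 1 = g → g ∈ Q →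
      monomial u (coeff u f) ∈ Q := by
    rintro _ t ht rfl hg
    have : (monomial u (coeff u f) : MvPolynomial (Fin m × Fin n) K) =
        monomial (u - t) (coeff u f) * monomial t 1 := by
      rw [monomial_mul, mul_one, tsub_add_cancel_of_le ht]
    rw [this]
    exact Ideal.mul_mem_left _ _ hg
  by_cases h0 : u (0, 0) ≠ 0
  · exact hdvd (X (0, 0)) (Finsupp.single (0, 0) 1) (by rw [Finsupp.single_le_iff]; omega) rfl hz
  push Not at h0
  by_cases h1 : ∃ a b, GEdge C a b ∧ u (0, b) ≠ 0 ∧ u (a, 0) ≠ 0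
  · obtain ⟨a, b, hab, hb, ha⟩ := h1
    refine hdvd (X (0, b) * X (a, 0)) (Finsupp.single (0, b) 1 + Finsupp.single (a, 0) 1) ?_
      (monomial_two K _ _) ?_
    · intro x
      simp only [Finsupp.add_apply, Finsupp.single_apply]
      split_ifs with h1 h2 h2
      · have := congrArg Prod.fst (h1.trans h2.symm)
        exact absurd this.symm (hab.ne_left hC)
      · subst h1; omega
      · subst h2; omega
      · omega
    · have h2 : X (0, 0) * X (a, b) - X (0, b) * X (a, 0) ∈ Q :=
        Ideal.mem_sup_left (f_mem K hC hab)
      have h3 := sub_mem (Ideal.mul_mem_right (X (a, b)) _ hz) h2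
      rwa [sub_sub_cancel] at h3
  · exfalso
    push Not at h1
    let κ : MvPolynomial (Fin m × Fin n) K →ₐ[K] MvPolynomial (Fin m × Fin n) K :=
      aeval (fun p => if u p = 0 then 0 else X p)
    have hI : minorIdeal K C ≤ RingHom.ker κ := by
      refine minorIdeal_le K hC fun a b hab => ?_
      rw [RingHom.mem_ker]
      by_cases hb : u (0, b) = 0
      · simp [κ, h0, hb]
      · simp [κ, h0, hb, h1 a b hab hb]
    have hk : f ^ N ∈ RingHom.ker κ := hI hf
    rw [RingHom.mem_ker, map_pow] at hk
    have hk0 : κ f = 0 := eq_zero_of_pow_eq_zero hk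
    have hfX : f ∈ Ideal.span ((X : Fin m × Fin n → MvPolynomial (Fin m × Fin n) K) ''
        {p | u p = 0}) := by
      have hcomp : (Ideal.Quotient.mkₐ K (Ideal.span
          ((X : Fin m × Fin n → MvPolynomial (Fin m × Fin n) K) '' {p | u p = 0}))).comp κ =
          Ideal.Quotient.mkₐ K _ := by
        apply MvPolynomial.algHom_ext
        intro p
        by_cases hp : u p = 0
        · simp only [κ, AlgHom.comp_apply, aeval_X, if_pos hp, map_zero, Ideal.Quotient.mkₐ_eq_mk]
          symm
          rw [Ideal.Quotient.eq_zero_iff_mem]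
          exact Ideal.subset_span ⟨p, hp, rfl⟩
        · simp [κ, hp]
      have := DFunLike.congr_fun hcomp f
      rw [AlgHom.comp_apply, hk0, map_zero] at this
      exact Ideal.Quotient.eq_zero_iff_mem.1 this.symm
    rw [mem_ideal_span_X_image] at hfX
    obtain ⟨p, hp, hup⟩ := hfX u hu
    exact hup hp

theorem forest_radical (hC : Corner C) (hno : ¬ HasCycle C) :
    (minorIdeal K C).radical = minorIdeal K C := by
  refine le_antisymm ?_ Ideal.le_radical
  rintro f ⟨N, hN⟩
  have h1 := sup_radical K hC hN
  obtain ⟨i, hi, s, hs, rfl⟩ := Submodule.mem_sup.1 h1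
  obtain ⟨t, rfl⟩ := Ideal.mem_span_singleton.1 hs
  have hJ : i + X (0, 0) * t ∈ toricIdeal K C :=
    (toric_prime K).mem_of_pow_mem N (minorIdeal_le_toric K hC hN)
  have hJ2 : X (0, 0) * t ∈ toricIdeal K C := by
    have := sub_mem hJ (minorIdeal_le_toric K hC hi)
    rwa [add_sub_cancel_left] at this
  have ht := ((toric_prime K).mem_or_mem hJ2).resolve_left (X_not_mem_toric K _)
  exact add_mem hi (z_toric_le K hC hno ht)

end Corner

theorem statement12 (K : Type*) [Field K] (m n : ℕ) [NeZero m] [NeZero n]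
    (C : Set (Minor2 m n)) (hC : ∀ δ ∈ C, δ.a1 = 0 ∧ δ.b1 = 0) :
    ((minorIdeal K C).radical = minorIdeal K C ↔
      ¬ ∃ σ : CycleIn C,
        (∀ k, vClass C (σ.p k) ≠ vClass C ((0 : Fin m), (0 : Fin n))) ∧
        (∀ k, hClass C (σ.p k) ≠ hClass C ((0 : Fin m), (0 : Fin n)))) ∧
    ((¬ ∃ σ : CycleIn C,
        (∀ k, vClass C (σ.p k) ≠ vClass C ((0 : Fin m), (0 : Fin n))) ∧
        (∀ k, hClass C (σ.p k) ≠ hClass C ((0 : Fin m), (0 : Fin n)))) →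
      minorIdeal K C =
        ⨅ W ∈ {W : Set (Fin m × Fin n) |
          Admissible C W ∧ PW K C W ∈ (minorIdeal K C).minimalPrimes},
          PW K C W) := by
  refine ⟨⟨fun h hc => not_radical K hC hc h, fun h => forest_radical K hC h⟩,
    fun h => decomposition K hC (forest_radical K hC h)⟩
end
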